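/- arXiv:2203.10423 — 2 statements merged into one kernel-verified Lean document; each statement's English description precedes it below -/
import Mathlib

section
/- Let p be an odd prime and let E, F ⊆ 𝔽_p² with |E| ≥ 4p, |F| ≥ 8p, and |F||E|² ≥ 64p⁴. Then there exists a subset F′ ⊆ F with |F′| ≥ |F|/24 such that |Δ*_x(E)| ≥ p/24 for every x ∈ F′. -/
/-- The "distance" between two points of `F × F`:
`‖x - y‖ = (x₁ - y₁)² + (x₂ - y₂)²`. -/
def fdist {F : Type*} [CommRing F] (x y : F × F) : F :=
  (x.1 - y.1) ^ 2 + (x.2 - y.2) ^ 2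

/-- The edge-length function of an embedding `φ` of vertices, as a function on `Sym2 V`. -/
def edgeLengths {F : Type*} [CommRing F] {V : Type*} (φ : V → F × F) : Sym2 V → F :=
  Sym2.lift ⟨fun a b => fdist (φ a) (φ b), fun a b => by simp only [fdist]; ring⟩

/-- The number of distinct trees `(T', x)` with vertices (other than `x`) in `A` which are
isomorphic to `(G, v)`: the number of distinct edge-length vectors, indexed by the edges of `G`,
coming from maps `φ : V → F × F` with `φ v = x` and `φ u ∈ A` for all `u ≠ v`. -/
noncomputable def treeCount {F : Type*} [CommRing F] {V : Type*} (G : SimpleGraph V) (v : V)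
    (x : F × F) (A : Set (F × F)) : ℕ :=
  Set.ncard { f : G.edgeSet → F |
    ∃ φ : V → F × F, φ v = x ∧ (∀ u, u ≠ v → φ u ∈ A) ∧ f = fun e => edgeLengths φ e.1 }

/-- The pinned nonzero distance set `Δ*_x(E)`. -/
def pinnedDist {F : Type*} [CommRing F] (x : F × F) (E : Set (F × F)) : Set F :=
  {d | d ≠ 0 ∧ ∃ y ∈ E, fdist x y = d}

/-- The number of triples `(a, b, c) ∈ A × B × C` with `‖a-b‖ = ‖a-c‖` and `‖b-c‖ ≠ 0`. -/
noncomputable def tripleCount {F : Type*} [CommRing F] (A B C : Set (F × F)) : ℕ :=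
  Set.ncard {t : (F × F) × (F × F) × (F × F) |
    t.1 ∈ A ∧ t.2.1 ∈ B ∧ t.2.2 ∈ C ∧
    fdist t.1 t.2.1 = fdist t.1 t.2.2 ∧ fdist t.2.1 t.2.2 ≠ 0}

/-- `ℓ` is an isotropic line: a line all of whose pairs of points are at distance `0`. -/
def IsIsotropicLine {F : Type*} [CommRing F] (ℓ : Set (F × F)) : Prop :=
  (∃ a d : F × F, d ≠ 0 ∧ ℓ = {z | ∃ t : F, z = a + t • d}) ∧
    ∀ x ∈ ℓ, ∀ y ∈ ℓ, fdist x y = 0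

/-- The perpendicular bisector of `a` and `b`. -/
def bisector {F : Type*} [CommRing F] (a b : F × F) : Set (F × F) :=
  {z | fdist z a = fdist z b}

/-- The bisector energy `Q(E)`. -/
noncomputable def bisectorEnergy {F : Type*} [CommRing F] (E : Set (F × F)) : ℕ :=
  Set.ncard {q : (F × F) × (F × F) × (F × F) × (F × F) |
    q.1 ∈ E ∧ q.2.1 ∈ E ∧ q.2.2.1 ∈ E ∧ q.2.2.2 ∈ E ∧
    fdist q.1 q.2.1 ≠ 0 ∧ fdist q.2.2.1 q.2.2.2 ≠ 0 ∧
    bisector q.1 q.2.1 = bisector q.2.2.1 q.2.2.2}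

/-!
Write `q = p`, `e = #E`, `f = #F`. If `Δ*_x(E)` is small, the Cauchy–Schwarz inequality gives many
pairs `(b, c) ∈ E × E` with `‖x - b‖ = ‖x - c‖ ≠ 0` (`many_isosceles`), and for `b ≠ c` such a pair
has `‖b - c‖ ≠ 0`. If this happened for most `x ∈ F`, there would be more than about `5 f e² / q`
isosceles triangles with apex in `F` and base in `E`. It is therefore enough to bound the number of
these triangles by a smaller multiple of `f e² / q`, which is `isosceles_le`.

Such triangles are incidences between `F` and the bisectors of pairs of points of `E`. Two
different lines meet in at most one point, so the variance over all `x` of the number of bisectors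
through `x` is at most `q Q`, where `Q` is the bisector energy, the number of `(a, b), (c, d)` with
the same non-isotropic bisector. One needs `Q ≪ e⁴ / q² + q e²` (`bisector_energy_le`).

If `a, b` and `c, d` have the same bisector, the reflection in it carries the pair `(a, c)` to the
pair `(b, d)`, and in particular `‖a - c‖ = ‖b - d‖ = r`. If `r = 0`, there are at most `2 q e`
choices of `(a, c)`, and then `b` determines `d`. For `r ≠ 0`, let `N_r` be the number of pairs of
points of `E` at distance `r`. Pairs at distance `r` are permuted simply transitively by rigid
motions, and a rotation or a non-isotropic translation is a product of two reflections in about `q`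
ways. Hence the number of reflected images of a pair which lie in `E × E` has mean `N_r / q` and a
small variance (`trap_trap_card_le`, `trap_energy_le`), so the contribution of `r` is
`≪ N_r² / q + q N_r`. Finally `∑ N_r² ≤ e⁴ / q + q² e²` (`sum_distCount_sq_le`), again by a variance
computation. In every case the variance is used through the linear inequality
`sum_le_of_variance`.

The plane is treated as `K[i]`, so that reflections are the maps `z ↦ λ z̄ + τ` with `λ λ̄ = 1` and
`λ τ̄ + τ = 0`.
-/

open Finset

/-! ### Reflections of the plane -/

/-- The map `z ↦ λ z̄ + τ` of the plane `K × K`, viewed as `K[i]`, with parameters `g = (λ, τ)`. -/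
def reflMap {K : Type*} [CommRing K] (g : (K × K) × (K × K)) (z : K × K) : K × K :=
  (g.1.1 * z.1 + g.1.2 * z.2 + g.2.1, g.1.2 * z.1 - g.1.1 * z.2 + g.2.2)

/-- `g = (λ, τ)` encodes the reflection in a (non-isotropic) line: `λ` has norm `1` and
`λ τ̄ + τ = 0`, so that `reflMap g` is an involution. -/
def IsReflection {K : Type*} [CommRing K] (g : (K × K) × (K × K)) : Prop :=
  g.1.1 ^ 2 + g.1.2 ^ 2 = 1 ∧ reflMap g g.2 = 0

/-- Some reflection in a line carries the pair `y` to the pair `z`; that is,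
`y.1, y.2, z.2, z.1` is an isosceles trapezoid, possibly degenerate. -/
def Trap {K : Type*} [CommRing K] (y z : (K × K) × (K × K)) : Prop :=
  ∃ g, IsReflection g ∧ reflMap g y.1 = z.1 ∧ reflMap g y.2 = z.2

section Algebra

variable {K : Type*} [Field K]

lemma reflMap_reflMap {g : (K × K) × (K × K)} (hg : IsReflection g) (z : K × K) :
    reflMap g (reflMap g z) = z := by
  obtain ⟨⟨⟨u, v⟩, ⟨s, t⟩⟩, ⟨x, y⟩⟩ := g, z
  simp only [IsReflection, reflMap, Prod.ext_iff, Prod.fst_zero, Prod.snd_zero] at hg ⊢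
  obtain ⟨h1, h2, h3⟩ := hg
  exact ⟨by linear_combination x * h1 + h2, by linear_combination y * h1 + h3⟩

lemma fdist_reflMap {g : (K × K) × (K × K)} (hg : IsReflection g) (y z : K × K) :
    fdist (reflMap g y) (reflMap g z) = fdist y z := by
  simp only [IsReflection, reflMap, fdist] at hg ⊢
  linear_combination ((y.1 - z.1) ^ 2 + (y.2 - z.2) ^ 2) * hg.1

lemma Trap.symm {y z : (K × K) × (K × K)} (h : Trap y z) : Trap z y := by
  obtain ⟨g, hg, h1, h2⟩ := h
  exact ⟨g, hg, by rw [← h1, reflMap_reflMap hg], by rw [← h2, reflMap_reflMap hg]⟩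

lemma Trap.fdist_eq {y z : (K × K) × (K × K)} (h : Trap y z) :
    fdist y.1 y.2 = fdist z.1 z.2 := by
  obtain ⟨g, hg, h1, h2⟩ := h
  rw [← h1, ← h2, fdist_reflMap hg]

lemma fdist_comm' (y z : K × K) : fdist y z = fdist z y := by
  simp only [fdist]; ring

/-- Cancellation of a vector of nonzero norm in `K[i]`. -/
lemma cancel_of_norm_ne_zero {x y u v u' v' : K} (h : x ^ 2 + y ^ 2 ≠ 0)
    (h1 : u * x + v * y = u' * x + v' * y) (h2 : v * x - u * y = v' * x - u' * y) :
    u = u' ∧ v = v' :=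
  ⟨mul_right_cancel₀ h (by linear_combination x * h1 - y * h2),
    mul_right_cancel₀ h (by linear_combination y * h1 + x * h2)⟩

/-- A reflection is determined by the image of a pair of points at nonzero distance. -/
lemma refl_unique_of_pair {g g' : (K × K) × (K × K)} {y : (K × K) × (K × K)}
    (hy : fdist y.1 y.2 ≠ 0) (h1 : reflMap g y.1 = reflMap g' y.1)
    (h2 : reflMap g y.2 = reflMap g' y.2) : g = g' := by
  obtain ⟨⟨u, v⟩, ⟨s, t⟩⟩ := g
  obtain ⟨⟨u', v'⟩, ⟨s', t'⟩⟩ := g'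
  simp only [reflMap, Prod.ext_iff, fdist] at *
  obtain ⟨rfl, rfl⟩ := cancel_of_norm_ne_zero (u := u) (v := v) (u' := u') (v' := v') hy
    (by linear_combination h1.1 - h2.1) (by linear_combination h1.2 - h2.2)
  exact ⟨⟨rfl, rfl⟩, by linear_combination h1.1, by linear_combination h1.2⟩

/-- A reflection is determined by one point and its image, if these are at nonzero distance. -/
lemma refl_unique_of_point {g g' : (K × K) × (K × K)} (hg : IsReflection g) (hg' : IsReflection g')
    {a b : K × K} (hab : fdist a b ≠ 0) (h1 : reflMap g a = b) (h2 : reflMap g' a = b) :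
    g = g' := by
  refine refl_unique_of_pair (y := (a, b)) hab (by rw [h1, h2]) ?_
  dsimp only
  nth_rw 1 [← h1]
  rw [← h2, reflMap_reflMap hg, reflMap_reflMap hg']

/-- If the perpendicular bisectors of `a, b` and of `c, d` share two points, then they coincide,
and the reflection in this line carries `(a, c)` to `(b, d)`. -/
lemma trap_of_two_common (h2 : (2 : K) ≠ 0) {a b c d x x' : K × K} (hab : fdist a b ≠ 0)
    (hcd : fdist c d ≠ 0) (hx : x ≠ x') (h1 : fdist x a = fdist x b)
    (h3 : fdist x c = fdist x d) (h4 : fdist x' a = fdist x' b)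
    (h5 : fdist x' c = fdist x' d) : Trap (a, c) (b, d) := by
  obtain ⟨⟨a1, a2⟩, ⟨b1, b2⟩, ⟨c1, c2⟩, ⟨d1, d2⟩⟩ := a, b, c, d
  obtain ⟨⟨x1, x2⟩, ⟨y1, y2⟩⟩ := x, x'
  simp only [fdist, ne_eq, Prod.mk.injEq] at *
  -- `(i, j)` is the direction of the common line
  obtain ⟨i, hi⟩ : ∃ i, i = x1 - y1 := ⟨_, rfl⟩
  obtain ⟨j, hj⟩ : ∃ j, j = x2 - y2 := ⟨_, rfl⟩
  have ho : (a1 - b1) * i + (a2 - b2) * j = 0 := by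
    apply mul_left_cancel₀ h2
    rw [hi, hj]; linear_combination h4 - h1
  have ho' : (c1 - d1) * i + (c2 - d2) * j = 0 := by
    apply mul_left_cancel₀ h2
    rw [hi, hj]; linear_combination h5 - h3
  have hne : i ≠ 0 ∨ j ≠ 0 := by
    by_contra hcon
    push Not at hcon
    exact hx ⟨by linear_combination hcon.1 - hi, by linear_combination hcon.2 - hj⟩
  -- a vector orthogonal to `(i, j)` is a multiple of `(-j, i)`
  have key : ∀ w1 w2 : K, w1 * i + w2 * j = 0 → ∃ s, w1 = - s * j ∧ w2 = s * i := by
    intro w1 w2 hw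
    rcases hne with h | h
    · exact ⟨w2 / i, by field_simp; linear_combination hw, by field_simp⟩
    · exact ⟨- w1 / j, by field_simp, by field_simp; linear_combination hw⟩
  obtain ⟨s, hs1, hs2⟩ := key _ _ ho
  obtain ⟨t, ht1, ht2⟩ := key _ _ ho'
  have hn : i ^ 2 + j ^ 2 ≠ 0 := by
    intro h0; apply hab
    rw [hs1, hs2]; linear_combination s ^ 2 * h0
  have hs : s ≠ 0 := by
    rintro rfl; apply hab; rw [hs1, hs2]; ring
  have ht : t ≠ 0 := by
    rintro rfl; apply hcd; rw [ht1, ht2]; ring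
  obtain rfl : b1 = a1 + s * j := by linear_combination -hs1
  obtain rfl : b2 = a2 - s * i := by linear_combination -hs2
  obtain rfl : d1 = c1 + t * j := by linear_combination -ht1
  obtain rfl : d2 = c2 - t * i := by linear_combination -ht2
  have e1 : 2 * ((a1 - x1) * j - (a2 - x2) * i) + s * (i ^ 2 + j ^ 2) = 0 := by
    apply mul_left_cancel₀ hs; linear_combination - h1
  have e2 : 2 * ((c1 - x1) * j - (c2 - x2) * i) + t * (i ^ 2 + j ^ 2) = 0 := by
    apply mul_left_cancel₀ ht; linear_combination - h3
  have hU : ∃ u, u * (i ^ 2 + j ^ 2) = i ^ 2 - j ^ 2 := ⟨_, div_mul_cancel₀ _ hn⟩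
  have hV : ∃ v, v * (i ^ 2 + j ^ 2) = 2 * i * j := ⟨_, div_mul_cancel₀ _ hn⟩
  obtain ⟨u, hu⟩ := hU
  obtain ⟨v, hv⟩ := hV
  refine ⟨((u, v), (x1 - u * x1 - v * x2, x2 - v * x1 + u * x2)), ⟨?_, ?_⟩, ?_, ?_⟩
  · apply mul_right_cancel₀ (pow_ne_zero 2 hn)
    dsimp only
    linear_combination (u * (i ^ 2 + j ^ 2) + i ^ 2 - j ^ 2) * hu +
      (v * (i ^ 2 + j ^ 2) + 2 * i * j) * hv
  · have huv : u ^ 2 + v ^ 2 = 1 := by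
      apply mul_right_cancel₀ (pow_ne_zero 2 hn)
      linear_combination (u * (i ^ 2 + j ^ 2) + i ^ 2 - j ^ 2) * hu +
        (v * (i ^ 2 + j ^ 2) + 2 * i * j) * hv
    simp only [reflMap, Prod.ext_iff, Prod.fst_zero, Prod.snd_zero]
    exact ⟨by linear_combination (-x1) * huv, by linear_combination (-x2) * huv⟩
  · simp only [reflMap, Prod.ext_iff]
    constructor <;> apply mul_right_cancel₀ hn
    · linear_combination (a1 - x1) * hu + (a2 - x2) * hv - j * e1
    · linear_combination (a1 - x1) * hv - (a2 - x2) * hu + i * e1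
  · simp only [reflMap, Prod.ext_iff]
    constructor <;> apply mul_right_cancel₀ hn
    · linear_combination (c1 - x1) * hu + (c2 - x2) * hv - j * e2
    · linear_combination (c1 - x1) * hv - (c2 - x2) * hu + i * e2

end Algebra

/-! ### Counting reflections -/

section Counting

variable {K : Type*} [Field K] [Fintype K]

open scoped Classical in
/-- The circle `N(z) = r` about the origin. -/
noncomputable def circ (K : Type*) [Field K] [Fintype K] (r : K) : Finset (K × K) :=
  univ.filter fun z => z.1 ^ 2 + z.2 ^ 2 = r

open scoped Classical in
/-- The set of parameters of reflections. -/
noncomputable def reflections (K : Type*) [Field K] [Fintype K] : Finset ((K × K) × (K × K)) :=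
  univ.filter IsReflection

lemma mem_circ {r : K} {z : K × K} : z ∈ circ K r ↔ z.1 ^ 2 + z.2 ^ 2 = r := by
  simp [circ]

lemma mem_reflections {g : (K × K) × (K × K)} : g ∈ reflections K ↔ IsReflection g := by
  simp [reflections]

open scoped Classical in
lemma line_card {α β : K} (γ : K) (h : α ≠ 0 ∨ β ≠ 0) :
    #{z : K × K | α * z.1 + β * z.2 = γ} = Fintype.card K := by
  rw [← card_univ]
  rcases h with h | h
  · refine card_nbij' (fun z => z.2) (fun y => ((γ - β * y) / α, y)) ?_ ?_ ?_ ?_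
    · intro z _; simp
    · intro y _; simp; field_simp; ring
    · intro z hz
      simp at hz
      ext <;> simp
      field_simp; linear_combination -hz
    · intro y _; simp
  · refine card_nbij' (fun z => z.1) (fun y => (y, (γ - α * y) / β)) ?_ ?_ ?_ ?_
    · intro z _; simp
    · intro y _; simp; field_simp; ring
    · intro z hz
      simp at hz
      ext <;> simp
      field_simp; linear_combination -hz
    · intro y _; simp

lemma circ_card_le (r : K) : #(circ K r) ≤ 2 * Fintype.card K := by
  classical
  rw [← card_univ]
  refine card_le_mul_card_image_of_maps_to (f := Prod.fst) (fun _ _ => mem_univ _) 2 ?_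
  intro x _
  rcases eq_empty_or_nonempty {a ∈ circ K r | a.1 = x} with h | ⟨w, hw⟩
  · simp [h]
  · refine le_trans (card_le_card (t := {(x, w.2), (x, -w.2)}) ?_) card_le_two
    intro z hz
    simp only [mem_filter, mem_circ] at hw hz
    have : (z.2 - w.2) * (z.2 + w.2) = 0 := by
      have h1 := hw.1; have h2 := hz.1
      rw [hw.2] at h1; rw [hz.2] at h2
      linear_combination h2 - h1
    rcases mul_eq_zero.mp this with h | h
    · simp [Prod.ext_iff, hz.2, sub_eq_zero.mp h]
    · simp [Prod.ext_iff, hz.2, eq_neg_of_add_eq_zero_left h]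

/-- Multiplication by an element of norm `r⁻¹` maps the circle of radius `r` into the
unit circle. -/
lemma circ_card_le_unit {r : K} (hr : r ≠ 0) : #(circ K r) ≤ #(circ K 1) := by
  rcases eq_empty_or_nonempty (circ K r) with h | ⟨w, hw⟩
  · simp [h]
  rw [mem_circ] at hw
  refine card_le_card_of_injOn
    (fun z => ((z.1 * w.1 + z.2 * w.2) / r, (z.2 * w.1 - z.1 * w.2) / r)) ?_ ?_
  · intro z hz
    have hz := mem_circ.mp hz
    refine mem_circ.mpr ?_
    dsimp only
    field_simp
    linear_combination (w.1 ^ 2 + w.2 ^ 2) * hz + r * hw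
  · intro z _ z' _ h
    simp only [Prod.mk.injEq, div_left_inj' hr] at h
    have hw' : w.1 ^ 2 + w.2 ^ 2 ≠ 0 := by rwa [hw]
    ext
    · apply mul_right_cancel₀ hw'; linear_combination w.1 * h.1 - w.2 * h.2
    · apply mul_right_cancel₀ hw'; linear_combination w.2 * h.1 + w.1 * h.2

lemma card_le_unit_circ_add_one (h2 : (2 : K) ≠ 0) :
    Fintype.card K ≤ #(circ K 1) + 1 := by
  classical
  have hsum : Fintype.card K ^ 2 = ∑ r : K, #(circ K r) := by
    have := card_eq_sum_card_fiberwise (s := (univ : Finset (K × K))) (t := univ)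
      (f := fun z => z.1 ^ 2 + z.2 ^ 2) (fun _ _ => mem_coe.mpr (mem_univ _))
    rw [card_univ, Fintype.card_prod] at this
    rw [pow_two, this]
    rfl
  rw [← add_sum_erase _ _ (mem_univ (0 : K))] at hsum
  have hle : ∑ r ∈ univ.erase (0 : K), #(circ K r) ≤ (Fintype.card K - 1) * #(circ K 1) := by
    rw [← card_univ, ← card_erase_of_mem (mem_univ (0 : K)), ← smul_eq_mul]
    exact sum_le_card_nsmul _ _ _ fun r hr => circ_card_le_unit (ne_of_mem_erase hr)
  have h0 := circ_card_le (0 : K)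
  have h3 : 2 < Fintype.card K := by
    have : ({0, 1, 2} : Finset K).card = 3 := by
      rw [card_eq_three]
      refine ⟨0, 1, 2, by simp, h2.symm, ?_, rfl⟩
      intro h; apply one_ne_zero (α := K); linear_combination -h
    have := card_le_univ ({0, 1, 2} : Finset K)
    omega
  generalize Fintype.card K = Q at *
  obtain ⟨n, rfl⟩ : ∃ n, Q = n + 3 := ⟨_, (Nat.sub_add_cancel h3).symm⟩
  by_contra hcon
  have hM : #(circ K 1) ≤ n + 1 := by omega
  have := Nat.mul_le_mul_left (n + 2) hM
  rw [show n + 3 - 1 = n + 2 by omega] at hle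
  nlinarith

open scoped Classical in
/-- There are as many reflections with a given linear part `λ` as points on a line. -/
lemma refl_fiber_card (h2 : (2 : K) ≠ 0) {l : K × K} (hl : l ∈ circ K 1) :
    #{t : K × K | IsReflection (l, t)} = Fintype.card K := by
  rw [mem_circ] at hl
  by_cases h : 1 + l.1 ≠ 0 ∨ l.2 ≠ 0
  · rw [← line_card 0 h]
    congr 1
    ext t
    simp only [mem_filter, mem_univ, true_and, IsReflection, reflMap, Prod.ext_iff,
      Prod.fst_zero, Prod.snd_zero, hl]
    constructor
    · intro h; linear_combination h.1
    · intro ht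
      refine ⟨by linear_combination ht, ?_⟩
      rcases h with h | h
      · apply mul_left_cancel₀ h; linear_combination l.2 * ht - t.2 * hl
      · apply mul_left_cancel₀ h; linear_combination (1 - l.1) * ht + t.1 * hl
  · push Not at h
    have h1 : l.1 = -1 := by linear_combination h.1
    rw [← line_card (α := (0 : K)) (β := 2) 0 (Or.inr h2)]
    congr 1
    ext t
    simp only [mem_filter, mem_univ, true_and, IsReflection, reflMap, Prod.ext_iff,
      Prod.fst_zero, Prod.snd_zero, h1, h.2]
    constructor
    · intro h; linear_combination h.2.2
    · intro ht; exact ⟨by ring, by ring, by linear_combination ht⟩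

lemma reflections_card (h2 : (2 : K) ≠ 0) :
    #(reflections K) = #(circ K 1) * Fintype.card K := by
  classical
  rw [card_eq_sum_card_fiberwise (f := Prod.fst) (t := circ K 1), sum_const_nat]
  · intro l hl
    rw [← refl_fiber_card h2 hl]
    refine card_nbij' (fun g => g.2) (fun t => (l, t)) ?_ ?_ ?_ ?_
    · intro g hg
      simp [mem_reflections] at hg ⊢
      rw [← hg.2]; exact hg.1
    · intro t ht
      simpa [mem_reflections] using ht
    · intro g hg
      simp at hg
      simp [← hg.2]
    · intro t _; rfl
  · intro g hg
    exact mem_circ.mpr (mem_reflections.mp hg).1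

open scoped Classical in
lemma pairs_card_le {r : K} (hr : r ≠ 0) :
    #{y : (K × K) × (K × K) | fdist y.1 y.2 = r} ≤ Fintype.card K ^ 2 * #(circ K 1) := by
  refine le_trans ?_ (Nat.mul_le_mul_left _ (circ_card_le_unit hr))
  have : Fintype.card K ^ 2 = #(univ : Finset (K × K)) := by
    rw [card_univ, Fintype.card_prod, pow_two]
  rw [this, ← card_product]
  refine card_le_card_of_injOn (fun y => (y.2, y.1 - y.2)) ?_ ?_
  · intro y hy
    have hy : fdist y.1 y.2 = r := by simpa using hy
    simpa [mem_circ, fdist] using hy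
  · intro y _ y' _ h
    simp only [Prod.mk.injEq] at h
    have h3 := h.2
    rw [h.1] at h3
    exact Prod.ext (sub_left_injective h3) h.1

open scoped Classical in
lemma trap_card (h2 : (2 : K) ≠ 0) {z : (K × K) × (K × K)} (hz : fdist z.1 z.2 ≠ 0) :
    #{y | Trap y z} = #(circ K 1) * Fintype.card K := by
  rw [← reflections_card h2]
  symm
  refine card_nbij (fun g => (reflMap g z.1, reflMap g z.2)) ?_ ?_ ?_
  · intro g hg
    have hg := mem_reflections.mp hg
    simp only [coe_filter, mem_univ, true_and, Set.mem_ofPred_eq]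
    exact Trap.symm ⟨g, hg, rfl, rfl⟩
  · intro g _ g' _ h
    simp only [Prod.mk.injEq] at h
    exact refl_unique_of_pair hz h.1 h.2
  · intro y hy
    simp only [coe_filter, mem_univ, true_and, Set.mem_ofPred_eq] at hy
    obtain ⟨g, hg, h1, h3⟩ := hy.symm
    exact ⟨g, mem_reflections.mpr hg, Prod.ext h1 h3⟩

open scoped Classical in
/-- Two distinct congruent nondegenerate pairs `z, z'` are images of few common pairs `y` under
reflections: if `g y = z`, `g' y = z'`, the composition `g' g⁻¹` is the unique rigid motion
carrying `z` to `z'`. When it is a rotation, both axes pass through its centre; when it is a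
translation, the direction of both axes is prescribed. -/
lemma trap_trap_card_le (h2 : (2 : K) ≠ 0) {z z' : (K × K) × (K × K)} (hne : z ≠ z')
    (hz : fdist z.1 z.2 ≠ 0) (hzz : fdist z.1 z.2 = fdist z'.1 z'.2) :
    #{y | Trap y z ∧ Trap y z'} ≤ #(circ K 1) + 1 := by
  set T : Finset ((K × K) × (K × K)) := {g ∈ reflections K |
    ∃ g' ∈ reflections K, reflMap g z.1 = reflMap g' z'.1 ∧ reflMap g z.2 = reflMap g' z'.2}
    with hT
  have hyT : #{y | Trap y z ∧ Trap y z'} ≤ #T := by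
    refine le_trans (card_le_card (t := T.image fun g => (reflMap g z.1, reflMap g z.2)) ?_)
      card_image_le
    intro y hy
    simp only [mem_filter, mem_univ, true_and] at hy
    obtain ⟨g, hg, h1, h3⟩ := hy.1.symm
    obtain ⟨g', hg', h1', h3'⟩ := hy.2.symm
    refine mem_image.mpr ⟨g, ?_, Prod.ext h1 h3⟩
    rw [hT, mem_filter]
    exact ⟨mem_reflections.mpr hg, g', mem_reflections.mpr hg', by rw [h1, h1'],
      by rw [h3, h3']⟩
  refine hyT.trans ?_
  obtain ⟨⟨a1, a2⟩, ⟨c1, c2⟩⟩ := z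
  obtain ⟨⟨a1', a2'⟩, ⟨c1', c2'⟩⟩ := z'
  simp only [fdist] at hz hzz
  have hz' : (a1' - c1') ^ 2 + (a2' - c2') ^ 2 ≠ 0 := hzz ▸ hz
  -- the unit `η = (h, k)` with `conj (a - c) = η * conj (a' - c')`
  obtain ⟨h, hh⟩ : ∃ h, h * ((a1' - c1') ^ 2 + (a2' - c2') ^ 2) =
      (a1 - c1) * (a1' - c1') + (a2 - c2) * (a2' - c2') := ⟨_, div_mul_cancel₀ _ hz'⟩
  obtain ⟨k, hk⟩ : ∃ k, k * ((a1' - c1') ^ 2 + (a2' - c2') ^ 2) =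
      (a1 - c1) * (a2' - c2') - (a2 - c2) * (a1' - c1') := ⟨_, div_mul_cancel₀ _ hz'⟩
  have hη1 : a1 - c1 = h * (a1' - c1') + k * (a2' - c2') := by
    apply mul_right_cancel₀ hz'
    linear_combination - (a1' - c1') * hh - (a2' - c2') * hk
  have hη2 : - (a2 - c2) = k * (a1' - c1') - h * (a2' - c2') := by
    apply mul_right_cancel₀ hz'
    linear_combination (a2' - c2') * hh - (a1' - c1') * hk
  have hηn : h ^ 2 + k ^ 2 = 1 := by
    apply mul_right_cancel₀ hz'
    have : (a2 - c2) = h * (a2' - c2') - k * (a1' - c1') := by linear_combination -hη2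
    rw [hη1, this] at hzz
    linear_combination hzz
  -- `κ = conj a - η * conj a'`
  obtain ⟨m, hm⟩ : ∃ m, m = a1 - (h * a1' + k * a2') := ⟨_, rfl⟩
  obtain ⟨n, hn⟩ : ∃ n, n = - a2 - (k * a1' - h * a2') := ⟨_, rfl⟩
  -- `(1 - η) τ + η * conj κ + λ κ = 0`
  have hTeq : ∀ g ∈ T, IsReflection g ∧
      (1 - h) * g.2.1 + k * g.2.2 + (h * m + k * n) + (g.1.1 * m - g.1.2 * n) = 0 ∧
      (1 - h) * g.2.2 - k * g.2.1 + (k * m - h * n) + (g.1.1 * n + g.1.2 * m) = 0 := by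
    intro g hg
    rw [hT, mem_filter] at hg
    obtain ⟨hg, g', hg', e1, e2⟩ := hg
    rw [mem_reflections] at hg hg'
    refine ⟨hg, ?_⟩
    obtain ⟨⟨u, v⟩, ⟨s, t⟩⟩ := g
    obtain ⟨⟨u', v'⟩, ⟨s', t'⟩⟩ := g'
    simp only [IsReflection, reflMap, Prod.ext_iff, Prod.fst_zero, Prod.snd_zero] at *
    obtain ⟨rfl, rfl⟩ := cancel_of_norm_ne_zero (u := u') (v := v') (u' := u * h - v * k)
      (v' := u * k + v * h) hz'
      (by linear_combination e2.1 - e1.1 + u * hη1 - v * hη2)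
      (by linear_combination e2.2 - e1.2 + v * hη1 + u * hη2)
    obtain rfl : s' = s + (u * m - v * n) := by
      rw [hm, hn]; linear_combination - e1.1
    obtain rfl : t' = t + (u * n + v * m) := by
      rw [hm, hn]; linear_combination - e1.2
    obtain ⟨g0, g1, g2⟩ := hg
    obtain ⟨g0', g1', g2'⟩ := hg'
    constructor
    · linear_combination g1' - h * g1 + k * g2 - (h * m + k * n) * g0
    · linear_combination g2' - k * g1 - h * g2 - (k * m - h * n) * g0
  by_cases hη : h = 1
  · -- translations
    subst hη
    have hk0 : k = 0 := by
      have : k ^ 2 = 0 := by linear_combination hηn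
      exact pow_eq_zero_iff (two_ne_zero) |>.mp this
    subst hk0
    have hmn : m ≠ 0 ∨ n ≠ 0 := by
      by_contra hcon
      push Not at hcon
      obtain ⟨rfl, rfl⟩ := hcon
      apply hne
      have q1 : a1 = a1' := by linear_combination -hm
      have q2 : a2 = a2' := by linear_combination hn
      have q3 : c1 = c1' := by linear_combination q1 - hη1
      have q4 : c2 = c2' := by linear_combination q2 + hη2
      rw [q1, q2, q3, q4]
    rcases eq_empty_or_nonempty T with hemp | ⟨g0, hg0⟩
    · simp [hemp]
    obtain ⟨hr0, f1, f2⟩ := hTeq g0 hg0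
    have hN : n ^ 2 + m ^ 2 ≠ 0 := by
      intro hN
      rcases hmn with hm0 | hn0
      · have : 2 * m ^ 2 = 0 := by linear_combination m * f1 + n * f2 + (1 - g0.1.1) * hN
        simp [h2, hm0] at this
      · have : 2 * n ^ 2 = 0 := by linear_combination -m * f1 - n * f2 + (1 + g0.1.1) * hN
        simp [h2, hn0] at this
    have hsame : ∀ g ∈ T, g.1 = g0.1 := by
      intro g hg
      obtain ⟨_, f3, f4⟩ := hTeq g hg
      obtain ⟨q1, q2⟩ := cancel_of_norm_ne_zero (x := n) (y := m) (u := g.1.1) (v := g.1.2)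
        (u' := g0.1.1) (v' := g0.1.2) hN (by linear_combination f4 - f2)
        (by linear_combination f1 - f3)
      exact Prod.ext q1 q2
    refine le_trans ?_ (card_le_unit_circ_add_one h2)
    rw [← refl_fiber_card h2 (mem_circ.mpr hr0.1)]
    refine card_le_card_of_injOn (fun g => g.2) ?_ ?_
    · intro g hg
      simp only [coe_filter, mem_univ, true_and, Set.mem_ofPred_eq]
      rw [← hsame g hg]
      exact (hTeq g hg).1
    · intro g hg g' hg' hgg
      exact Prod.ext ((hsame g hg).trans (hsame g' hg').symm) hgg
  · -- rotations
    refine le_trans ?_ (Nat.le_succ _)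
    refine card_le_card_of_injOn (fun g => g.1) ?_ ?_
    · intro g hg
      exact mem_circ.mpr (hTeq g hg).1.1
    · intro g hg g' hg' hgg
      obtain ⟨_, f1, f2⟩ := hTeq g hg
      obtain ⟨_, f3, f4⟩ := hTeq g' hg'
      dsimp only at hgg
      rw [← hgg] at f3 f4
      refine Prod.ext hgg ?_
      -- `1 - η` is invertible: its norm is `2 (1 - h)`
      have hN : 2 * (1 - h) ≠ 0 := mul_ne_zero h2 (sub_ne_zero.mpr (Ne.symm hη))
      ext
      · apply mul_left_cancel₀ hN
        linear_combination (1 - h) * (f1 - f3) - k * (f2 - f4) - (g.2.1 - g'.2.1) * hηn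
      · apply mul_left_cancel₀ hN
        linear_combination (1 - h) * (f2 - f4) + k * (f1 - f3) - (g.2.2 - g'.2.2) * hηn

end Counting

/-! ### Second-moment bounds -/

section SecondMoments

/-- First-moment bound on `S` by the variance on a larger set `U` (with an arbitrary value `μ`
in place of the mean), from `x ≤ x ^ 2 / (2 * s) + s / 2`. -/
lemma sum_le_of_variance {α : Type*} {S U : Finset α} (hS : S ⊆ U) (n : α → ℝ) (μ : ℝ) {s : ℝ}
    (hs : 0 < s) :
    ∑ y ∈ S, n y ≤ μ * #S +
      (∑ y ∈ U, n y ^ 2 - 2 * μ * ∑ y ∈ U, n y + μ ^ 2 * #U) / (2 * s) + s * #S / 2 := by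
  have h1 : ∑ y ∈ S, n y ≤ ∑ y ∈ S, (μ + (n y - μ) ^ 2 / (2 * s) + s / 2) := by
    refine sum_le_sum fun y _ => ?_
    have : (n y - μ) ^ 2 / (2 * s) + s / 2 - (n y - μ) = (n y - μ - s) ^ 2 / (2 * s) := by
      field_simp; ring
    have : 0 ≤ (n y - μ - s) ^ 2 / (2 * s) := by positivity
    linarith
  have h2 : ∑ y ∈ S, (n y - μ) ^ 2 ≤ ∑ y ∈ U, (n y - μ) ^ 2 :=
    sum_le_sum_of_subset_of_nonneg hS fun _ _ _ => sq_nonneg _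
  have h3 : ∑ y ∈ U, (n y - μ) ^ 2 =
      ∑ y ∈ U, n y ^ 2 - 2 * μ * ∑ y ∈ U, n y + μ ^ 2 * #U := by
    simp only [sub_sq, sum_add_distrib, sum_sub_distrib, sum_const, nsmul_eq_mul, mul_sum]
    congr 1
    · congr 1; exact sum_congr rfl fun _ _ => by ring
    · ring
  rw [sum_add_distrib, sum_add_distrib, ← sum_div, sum_const, sum_const, nsmul_eq_mul,
    nsmul_eq_mul] at h1
  rw [← h3]
  have := div_le_div_of_nonneg_right h2 (by positivity : 0 ≤ 2 * s)
  linarith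

open scoped Classical in
lemma sum_card_comm {α β : Type*} (U : Finset α) (J : Finset β) (R : α → β → Prop) :
    ∑ x ∈ U, (#{j ∈ J | R x j} : ℝ) = ∑ j ∈ J, (#{x ∈ U | R x j} : ℝ) := by
  exact_mod_cast sum_card_bipartiteAbove_eq_sum_card_bipartiteBelow R

open scoped Classical in
lemma sum_card_sq {α β : Type*} (U : Finset α) (J : Finset β) (R : α → β → Prop) :
    ∑ x ∈ U, (#{j ∈ J | R x j} : ℝ) ^ 2 =
      ∑ j ∈ J, ∑ j' ∈ J, (#{x ∈ U | R x j ∧ R x j'} : ℝ) := by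
  have h := sum_card_comm U (J ×ˢ J) (fun x w => R x w.1 ∧ R x w.2)
  rw [sum_product (s := J)] at h
  convert h using 1
  swap
  · congr!
  refine sum_congr rfl fun x _ => ?_
  rw [pow_two, ← Nat.cast_mul, ← card_product, ← filter_product]
  congr!

end SecondMoments

/-! ### Congruent pairs related by a reflection -/

section Energy

variable {K : Type*} [Field K] [Fintype K]

open scoped Classical in
/-- The number of ordered pairs in `E` at distance `r`. -/
noncomputable def distCount (E : Finset (K × K)) (r : K) : ℕ :=
  #{y ∈ E ×ˢ E | fdist y.1 y.2 = r}

open scoped Classical in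
lemma bisector_card (h2 : (2 : K) ≠ 0) {b c : K × K} (h : b ≠ c) :
    #{x : K × K | fdist x b = fdist x c} = Fintype.card K := by
  have : 2 * (b.1 - c.1) ≠ 0 ∨ 2 * (b.2 - c.2) ≠ 0 := by
    by_contra hcon
    simp only [mul_eq_zero, h2, false_or, sub_eq_zero, ne_eq] at hcon
    push Not at hcon
    exact h (Prod.ext hcon.1 hcon.2)
  rw [← line_card (b.1 ^ 2 + b.2 ^ 2 - c.1 ^ 2 - c.2 ^ 2) this]
  congr 1
  ext x
  simp only [mem_filter, mem_univ, true_and]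
  simp only [fdist]
  constructor <;> intro h
  · linear_combination -h
  · linear_combination -h

/-- Second moment of the distance counts. The deviation of `#{b ∈ E | fdist a b = r}` from its
mean `#E / q` has an explicit total variance over all `(a, r)`, because perpendicular bisectors
are lines. -/
lemma sum_distCount_sq_le (h2 : (2 : K) ≠ 0) (E : Finset (K × K)) :
    ∑ r : K, (distCount E r : ℝ) ^ 2 ≤
      (#E : ℝ) ^ 4 / Fintype.card K + (Fintype.card K : ℝ) ^ 2 * (#E : ℝ) ^ 2 := by
  classical
  set q : ℝ := (Fintype.card K : ℝ) with hq
  have hq0 : 0 < q := by rw [hq]; exact_mod_cast Fintype.card_pos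
  set e : ℝ := (#E : ℝ) with he
  set d : (K × K) → K → ℝ := fun a r => #{b ∈ E | fdist a b = r} with hd
  have hN : ∀ r, (distCount E r : ℝ) = ∑ a ∈ E, d a r := by
    intro r
    rw [distCount, card_filter, sum_product]
    push_cast
    refine sum_congr rfl fun a _ => ?_
    rw [hd]; dsimp only; rw [card_filter]; push_cast; rfl
  have hd1 : ∀ a, ∑ r, d a r = e := by
    intro a
    rw [he, card_eq_sum_card_fiberwise (f := fun b => fdist a b) (t := univ)
      (fun _ _ => mem_coe.mpr (mem_univ _))]
    push_cast; rfl
  have hd2 : ∑ a : K × K, ∑ r, d a r ^ 2 ≤ q ^ 2 * e + q * e ^ 2 := by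
    have h := sum_card_sq (univ : Finset ((K × K) × K)) E (fun x b => fdist x.1 b = x.2)
    rw [← univ_product_univ, sum_product] at h
    rw [hd, h]
    have : ∀ b ∈ E, ∀ c ∈ E, (#{x ∈ (univ : Finset (K × K)) ×ˢ (univ : Finset K) |
        fdist x.1 b = x.2 ∧ fdist x.1 c = x.2} : ℝ) ≤ (if b = c then q ^ 2 else 0) + q := by
      intro b _ c _
      have hle : #{x ∈ (univ : Finset (K × K)) ×ˢ (univ : Finset K) |
        fdist x.1 b = x.2 ∧ fdist x.1 c = x.2} ≤ #{x : K × K | fdist x b = fdist x c} := by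
        refine card_le_card_of_injOn (fun x => x.1) ?_ ?_
        · intro x hx
          simp at hx ⊢
          rw [hx.1, hx.2]
        · intro x hx y hy hxy
          simp at hx hy hxy
          refine Prod.ext hxy ?_
          rw [← hx.1, ← hy.1, hxy]
      refine le_trans (Nat.cast_le.mpr hle) ?_
      split_ifs with hbc
      · have : #{x : K × K | fdist x b = fdist x c} ≤ Fintype.card K ^ 2 := by
          refine (card_le_univ _).trans ?_
          rw [Fintype.card_prod, pow_two]
        have : (#{x : K × K | fdist x b = fdist x c} : ℝ) ≤ q ^ 2 := by
          rw [hq]; exact_mod_cast this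
        linarith
      · rw [bisector_card h2 hbc]; simp [hq]
    refine (sum_le_sum fun b hb => sum_le_sum fun c hc => this b hb c hc).trans ?_
    simp only [sum_add_distrib, sum_ite_eq, sum_const, nsmul_eq_mul, ← he]
    rw [sum_ite_mem]
    simp only [inter_self, sum_const, nsmul_eq_mul, ← he]
    linarith
  have hvar : ∑ a : K × K, ∑ r, (d a r - e / q) ^ 2 ≤ q ^ 2 * e := by
    have : ∀ a, ∑ r, (d a r - e / q) ^ 2 = ∑ r, d a r ^ 2 - e ^ 2 / q := by
      intro a
      simp only [sub_sq, sum_add_distrib, sum_sub_distrib, sum_const, nsmul_eq_mul, card_univ,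
        ← hq]
      rw [← sum_mul, ← mul_sum, hd1]
      field_simp; ring
    rw [sum_congr rfl fun a _ => this a, sum_sub_distrib, sum_const, card_univ,
      Fintype.card_prod, nsmul_eq_mul]
    push_cast
    rw [← hq]
    have : q * q * (e ^ 2 / q) = q * e ^ 2 := by field_simp
    linarith
  have hvar2 : ∑ r, ((distCount E r : ℝ) - e ^ 2 / q) ^ 2 ≤ q ^ 2 * e ^ 2 := by
    have h1 : ∀ r, ((distCount E r : ℝ) - e ^ 2 / q) ^ 2 ≤ e * ∑ a ∈ E, (d a r - e / q) ^ 2 := by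
      intro r
      have : (distCount E r : ℝ) - e ^ 2 / q = ∑ a ∈ E, (d a r - e / q) := by
        rw [hN, sum_sub_distrib, sum_const, nsmul_eq_mul, ← he]; ring
      rw [this]
      exact sq_sum_le_card_mul_sum_sq
    refine (sum_le_sum fun r _ => h1 r).trans ?_
    rw [← mul_sum, sum_comm]
    have : ∑ a ∈ E, ∑ r, (d a r - e / q) ^ 2 ≤ ∑ a : K × K, ∑ r, (d a r - e / q) ^ 2 :=
      sum_le_sum_of_subset_of_nonneg (subset_univ _)
        fun _ _ _ => sum_nonneg fun _ _ => sq_nonneg _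
    have he0 : 0 ≤ e := by positivity
    nlinarith
  have hexp : ∑ r, ((distCount E r : ℝ) - e ^ 2 / q) ^ 2 =
      ∑ r, (distCount E r : ℝ) ^ 2 - e ^ 4 / q := by
    simp only [sub_sq, sum_add_distrib, sum_sub_distrib, sum_const, nsmul_eq_mul, card_univ,
        ← hq]
    have : ∑ r, (distCount E r : ℝ) = e ^ 2 := by
      rw [sum_congr rfl fun r _ => hN r, sum_comm, sum_congr rfl fun a _ => hd1 a, sum_const,
        nsmul_eq_mul, ← he, pow_two]
    rw [← sum_mul, ← mul_sum, this]
    field_simp; ring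
  linarith

open scoped Classical in
/-- Pairs of congruent pairs at a fixed nonzero distance that are exchanged by a reflection.
For `y` at distance `r`, the number of images of `y` lying in `E × E` has mean
`distCount E r / q`, and its variance is controlled by `trap_trap_card_le`. -/
lemma trap_energy_le (h2 : (2 : K) ≠ 0) (E : Finset (K × K)) {r : K} (hr : r ≠ 0) :
    ∑ y ∈ (E ×ˢ E).filter (fun y => fdist y.1 y.2 = r),
      (#{z ∈ (E ×ˢ E).filter (fun y => fdist y.1 y.2 = r) | Trap y z} : ℝ) ≤
      3 / 2 * ((distCount E r : ℝ) ^ 2 / Fintype.card K) +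
        3 / 2 * (Fintype.card K * distCount E r) := by
  set S : Finset ((K × K) × (K × K)) := (E ×ˢ E).filter (fun y => fdist y.1 y.2 = r) with hS
  set U : Finset ((K × K) × (K × K)) := univ.filter (fun y => fdist y.1 y.2 = r) with hU
  have hSU : S ⊆ U := by
    intro y hy
    rw [hS, mem_filter] at hy
    simp [hU, hy.2]
  have hN : distCount E r = #S := rfl
  rw [hN]
  set N : ℝ := (#S : ℝ)
  set q : ℝ := (Fintype.card K : ℝ) with hq
  have hq0 : 0 < q := by rw [hq]; exact_mod_cast Fintype.card_pos
  set M : ℝ := (#(circ K 1) : ℝ) with hM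
  have hM2 : M ≤ 2 * q := by rw [hM, hq]; exact_mod_cast circ_card_le (1 : K)
  have hUc : (#U : ℝ) ≤ q ^ 2 * M := by rw [hM, hq]; exact_mod_cast pairs_card_le hr
  have hmean : ∑ y ∈ U, (#{z ∈ S | Trap y z} : ℝ) = N * (M * q) := by
    rw [sum_card_comm, sum_congr rfl (g := fun _ => M * q), sum_const, nsmul_eq_mul]
    intro z hz
    have hz' := (mem_filter.mp hz).2
    rw [hM, hq, ← Nat.cast_mul, ← trap_card h2 (z := z) (by rw [hz']; exact hr)]
    congr 2
    ext y
    simp only [hU, mem_filter, mem_univ, true_and, and_iff_right_iff_imp]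
    intro h
    rw [h.fdist_eq, hz']
  have hsq : ∑ y ∈ U, (#{z ∈ S | Trap y z} : ℝ) ^ 2 ≤ N * (M * q) + N ^ 2 * (M + 1) := by
    rw [sum_card_sq]
    have : ∀ z ∈ S, ∀ z' ∈ S, (#{y ∈ U | Trap y z ∧ Trap y z'} : ℝ) ≤
        (if z = z' then M * q else 0) + (M + 1) := by
      intro z hz z' hz'
      have hz1 := (mem_filter.mp hz).2
      have hz2 := (mem_filter.mp hz').2
      have hle : #{y ∈ U | Trap y z ∧ Trap y z'} ≤ #{y | Trap y z ∧ Trap y z'} :=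
        card_le_card (filter_subset_filter _ (subset_univ _))
      have hle' : (#{y ∈ U | Trap y z ∧ Trap y z'} : ℝ) ≤ #{y | Trap y z ∧ Trap y z'} :=
        Nat.cast_le.mpr hle
      split_ifs with h
      · subst h
        have := trap_card h2 (z := z) (by rw [hz1]; exact hr)
        simp only [and_self] at hle' ⊢
        rw [this] at hle'
        push_cast at hle'
        have : 0 ≤ M := by positivity
        linarith
      · have := trap_trap_card_le h2 h (by rw [hz1]; exact hr) (by rw [hz1, hz2])
        have : (#{y | Trap y z ∧ Trap y z'} : ℝ) ≤ M + 1 := by rw [hM]; exact_mod_cast this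
        linarith
    refine (sum_le_sum fun b hb => sum_le_sum fun c hc => this b hb c hc).trans ?_
    simp only [sum_add_distrib, sum_ite_eq, sum_const, nsmul_eq_mul]
    rw [sum_ite_mem]
    simp only [inter_self, sum_const, nsmul_eq_mul]
    apply le_of_eq; ring
  have := sum_le_of_variance hSU (fun y => (#{z ∈ S | Trap y z} : ℝ)) (N / q) hq0
  rw [hmean] at this
  refine this.trans ?_
  have hb : (∑ y ∈ U, (#{z ∈ S | Trap y z} : ℝ) ^ 2 - 2 * (N / q) * (N * (M * q)) +
      (N / q) ^ 2 * #U) ≤ N * (M * q) + N ^ 2 := by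
    have h1 : (N / q) ^ 2 * #U ≤ (N / q) ^ 2 * (q ^ 2 * M) := by gcongr
    have h3 : (N / q) ^ 2 * (q ^ 2 * M) = N ^ 2 * M := by field_simp
    have h4 : 2 * (N / q) * (N * (M * q)) = 2 * N ^ 2 * M := by field_simp
    linarith
  have hb' := div_le_div_of_nonneg_right hb (by positivity : 0 ≤ 2 * q)
  have h5 : (N * (M * q) + N ^ 2) / (2 * q) = N * M / 2 + N ^ 2 / q / 2 := by field_simp
  have h6 : N / q * N = N ^ 2 / q := by ring
  have hN0 : 0 ≤ N := by positivity
  have h7 : N * M ≤ N * (2 * q) := by gcongr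
  change N / q * N + _ + q * N / 2 ≤ _
  linarith

end Energy

/-! ### Bisector energy and isosceles triangles -/

section Incidences

variable {K : Type*} [Field K] [Fintype K]

open scoped Classical in
/-- Bisector energy: quadruples `((a, c), (b, d))` for which one reflection maps `a` to `b` and
`c` to `d`, where `a, b` are at nonzero distance. -/
lemma bisector_energy_le (h2 : (2 : K) ≠ 0) (E : Finset (K × K)) :
    (#{w ∈ (E ×ˢ E) ×ˢ (E ×ˢ E) | fdist w.1.1 w.2.1 ≠ 0 ∧ Trap w.1 w.2} : ℝ) ≤
      5 * (Fintype.card K * (#E : ℝ) ^ 2) +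
        3 / 2 * ((#E : ℝ) ^ 4 / (Fintype.card K : ℝ) ^ 2) := by
  set q : ℝ := (Fintype.card K : ℝ) with hq
  have hq0 : 0 < q := by rw [hq]; exact_mod_cast Fintype.card_pos
  set e : ℝ := (#E : ℝ) with he
  set f : (K × K) × (K × K) → ℝ :=
    fun y => #{z ∈ E ×ˢ E | fdist y.1 z.1 ≠ 0 ∧ Trap y z} with hf
  have hQ : (#{w ∈ (E ×ˢ E) ×ˢ (E ×ˢ E) | fdist w.1.1 w.2.1 ≠ 0 ∧ Trap w.1 w.2} : ℝ) =
      ∑ y ∈ E ×ˢ E, f y := by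
    rw [card_filter, sum_product]
    push_cast
    refine sum_congr rfl fun a _ => ?_
    rw [hf]; dsimp only; rw [card_filter]; push_cast; rfl
  have hfib : ∑ y ∈ E ×ˢ E, f y =
      ∑ r : K, ∑ y ∈ (E ×ˢ E).filter (fun y => fdist y.1 y.2 = r), f y :=
    (sum_fiberwise (E ×ˢ E) (fun y => fdist y.1 y.2) f).symm
  have hN0 : (distCount E 0 : ℝ) ≤ 2 * q * e := by
    have : distCount E 0 ≤ #(E ×ˢ circ K 0) := by
      refine card_le_card_of_injOn (fun y => (y.2, y.1 - y.2)) ?_ ?_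
      · intro y hy
        have hy := mem_filter.mp hy
        refine mem_product.mpr ⟨(mem_product.mp hy.1).2, mem_circ.mpr ?_⟩
        simpa [fdist] using hy.2
      · intro y _ y' _ h
        simp only [Prod.mk.injEq] at h
        have h3 := h.2
        rw [h.1] at h3
        exact Prod.ext (sub_left_injective h3) h.1
    rw [card_product] at this
    have h3 : (distCount E 0 : ℝ) ≤ e * #(circ K 0) := by rw [he]; exact_mod_cast this
    have h4 : (#(circ K 0) : ℝ) ≤ 2 * q := by rw [hq]; exact_mod_cast circ_card_le (0 : K)
    have : 0 ≤ e := by positivity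
    nlinarith
  have hf0 : ∑ y ∈ (E ×ˢ E).filter (fun y => fdist y.1 y.2 = 0), f y ≤ 2 * (q * e ^ 2) := by
    have : ∀ y ∈ (E ×ˢ E).filter (fun y => fdist y.1 y.2 = 0), f y ≤ e := by
      intro y _
      rw [hf, he]
      refine Nat.cast_le.mpr (card_le_card_of_injOn (fun z => z.1) ?_ ?_)
      · intro z hz
        exact (mem_product.mp (mem_filter.mp hz).1).1
      · intro z hz z' hz' hzz
        obtain ⟨-, hne, g, hg, g1, g2⟩ := mem_filter.mp hz
        obtain ⟨-, -, g', hg', g1', g2'⟩ := mem_filter.mp hz'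
        have := refl_unique_of_point hg hg' hne g1 (by rw [g1']; exact hzz.symm)
        refine Prod.ext hzz ?_
        rw [← g2, ← g2', this]
    have h1 := sum_le_card_nsmul _ _ _ this
    rw [nsmul_eq_mul] at h1
    have h3 : (#((E ×ˢ E).filter (fun y => fdist y.1 y.2 = 0)) : ℝ) ≤ 2 * q * e := hN0
    have : 0 ≤ e := by positivity
    nlinarith
  have hfr : ∀ r ∈ univ.erase (0 : K),
      ∑ y ∈ (E ×ˢ E).filter (fun y => fdist y.1 y.2 = r), f y ≤
        3 / 2 * ((distCount E r : ℝ) ^ 2 / q) + 3 / 2 * (q * distCount E r) := by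
    intro r hr
    refine le_trans (sum_le_sum fun y hy => ?_) (trap_energy_le h2 E (ne_of_mem_erase hr))
    rw [hf]
    refine Nat.cast_le.mpr (card_le_card fun z hz => ?_)
    have hz := mem_filter.mp hz
    refine mem_filter.mpr ⟨mem_filter.mpr ⟨hz.1, ?_⟩, hz.2.2⟩
    rw [← hz.2.2.fdist_eq]
    exact (mem_filter.mp hy).2
  have hsumN : ∑ r : K, (distCount E r : ℝ) = e ^ 2 := by
    have := card_eq_sum_card_fiberwise (s := E ×ˢ E) (t := (univ : Finset K))
      (f := fun y => fdist y.1 y.2) (fun _ _ => mem_coe.mpr (mem_univ _))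
    rw [card_product] at this
    rw [he, pow_two]
    exact_mod_cast this.symm
  have hall : ∑ r ∈ univ.erase (0 : K),
      ∑ y ∈ (E ×ˢ E).filter (fun y => fdist y.1 y.2 = r), f y ≤
        ∑ r : K, (3 / 2 * ((distCount E r : ℝ) ^ 2 / q) + 3 / 2 * (q * distCount E r)) :=
    (sum_le_sum hfr).trans
      (sum_le_sum_of_subset_of_nonneg (erase_subset _ _) fun _ _ _ => by positivity)
  rw [sum_add_distrib, ← mul_sum, ← mul_sum, ← mul_sum, ← sum_div, hsumN] at hall
  have hmom := div_le_div_of_nonneg_right (sum_distCount_sq_le h2 E) hq0.le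
  rw [← hq, ← he] at hmom
  have h5 : (e ^ 4 / q + q ^ 2 * e ^ 2) / q = e ^ 4 / q ^ 2 + q * e ^ 2 := by field_simp
  rw [hQ, hfib, ← add_sum_erase _ _ (mem_univ (0 : K))]
  linarith

open scoped Classical in
/-- The number of isosceles triangles with apex `x` and base `(b, c)` in `E`, where `b, c` are at
nonzero distance. -/
noncomputable def isoCount (E : Finset (K × K)) (x : K × K) : ℕ :=
  #{j ∈ E ×ˢ E | fdist j.1 j.2 ≠ 0 ∧ fdist x j.1 = fdist x j.2}

open scoped Classical in
/-- Isosceles triangles with apex in `F` and base in `E`: an incidence bound between `F` and the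
multiset of bisectors of pairs of points of `E`. -/
lemma isosceles_le (h2 : (2 : K) ≠ 0) (E F : Finset (K × K)) (hE : 0 < #E) :
    ∑ x ∈ F, (isoCount E x : ℝ) ≤
      3 / 2 * (#F * (#E : ℝ) ^ 2 / Fintype.card K) + 5 / 2 * (Fintype.card K : ℝ) ^ 3 +
        3 / 4 * (#E : ℝ) ^ 2 := by
  set q : ℝ := (Fintype.card K : ℝ) with hq
  have hq0 : 0 < q := by rw [hq]; exact_mod_cast Fintype.card_pos
  set e : ℝ := (#E : ℝ) with he
  have he0 : 0 < e := by rw [he]; exact_mod_cast hE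
  set P := (E ×ˢ E).filter (fun j => fdist j.1 j.2 ≠ 0) with hP
  have hPe : (#P : ℝ) ≤ e ^ 2 := by
    have : #P ≤ #E * #E := (card_filter_le _ _).trans (card_product _ _).le
    rw [he, pow_two]; exact_mod_cast this
  set i : K × K → ℝ := fun x => #{j ∈ P | fdist x j.1 = fdist x j.2} with hi
  have hi' : ∀ x, (isoCount E x : ℝ) = i x := by
    intro x
    simp only [hi, hP, isoCount, filter_filter]
  rw [sum_congr rfl fun x _ => hi' x]
  have hne : ∀ j ∈ P, j.1 ≠ j.2 := by
    intro j hj h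
    apply (mem_filter.mp hj).2
    rw [h]; simp [fdist]
  have hmean : ∑ x : K × K, i x = q * #P := by
    have := sum_card_comm (univ : Finset (K × K)) P (fun x j => fdist x j.1 = fdist x j.2)
    rw [hi, this, sum_congr rfl fun j hj => by rw [bisector_card h2 (hne j hj)], sum_const,
      nsmul_eq_mul, ← hq]
    ring
  have hsq : ∑ x : K × K, i x ^ 2 ≤ q * (5 * (q * e ^ 2) + 3 / 2 * (e ^ 4 / q ^ 2)) +
      (#P : ℝ) ^ 2 := by
    have := sum_card_sq (univ : Finset (K × K)) P (fun x j => fdist x j.1 = fdist x j.2)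
    rw [hi, this]
    have hpt : ∀ j ∈ P, ∀ j' ∈ P, (#{x : K × K | fdist x j.1 = fdist x j.2 ∧
        fdist x j'.1 = fdist x j'.2} : ℝ) ≤
        q * (if Trap (j.1, j'.1) (j.2, j'.2) then 1 else 0) + 1 := by
      intro j hj j' hj'
      split_ifs with h
      · have : #{x : K × K | fdist x j.1 = fdist x j.2 ∧ fdist x j'.1 = fdist x j'.2} ≤
            #{x : K × K | fdist x j.1 = fdist x j.2} :=
          card_le_card (monotone_filter_right _ fun x _ hx => hx.1)
        rw [bisector_card h2 (hne j hj)] at this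
        have := Nat.cast_le (α := ℝ) |>.mpr this
        linarith
      · have : #{x : K × K | fdist x j.1 = fdist x j.2 ∧ fdist x j'.1 = fdist x j'.2} ≤ 1 := by
          rw [card_le_one]
          intro x hx x' hx'
          simp only [mem_filter, mem_univ, true_and] at hx hx'
          by_contra hxx
          exact h (trap_of_two_common h2 (mem_filter.mp hj).2 (mem_filter.mp hj').2 hxx
            hx.1 hx.2 hx'.1 hx'.2)
        have := Nat.cast_le (α := ℝ) |>.mpr this
        push_cast at this
        linarith
    refine (sum_le_sum fun b hb => sum_le_sum fun c hc => hpt b hb c hc).trans ?_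
    simp only [sum_add_distrib, ← mul_sum, sum_const, nsmul_eq_mul, mul_one]
    have hcount : ∑ j ∈ P, ∑ j' ∈ P, (if Trap (j.1, j'.1) (j.2, j'.2) then (1 : ℝ) else 0) ≤
        5 * (q * e ^ 2) + 3 / 2 * (e ^ 4 / q ^ 2) := by
      refine le_trans ?_ (bisector_energy_le h2 E)
      rw [← sum_product (s := P) (t := P)
        (f := fun w => if Trap (w.1.1, w.2.1) (w.1.2, w.2.2) then (1 : ℝ) else 0)]
      rw [sum_boole]
      refine Nat.cast_le.mpr (card_le_card_of_injOn
        (fun w => ((w.1.1, w.2.1), (w.1.2, w.2.2))) ?_ ?_)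
      · intro w hw
        have hw := mem_filter.mp hw
        have hw1 := mem_product.mp hw.1
        have h3 := mem_filter.mp hw1.1
        have h4 := mem_filter.mp hw1.2
        have h5 := mem_product.mp h3.1
        have h6 := mem_product.mp h4.1
        exact mem_filter.mpr ⟨mem_product.mpr ⟨mem_product.mpr ⟨h5.1, h6.1⟩,
          mem_product.mpr ⟨h5.2, h6.2⟩⟩, h3.2, hw.2⟩
      · intro w _ w' _ h
        simp only [Prod.mk.injEq] at h
        exact Prod.ext (Prod.ext h.1.1 h.2.1) (Prod.ext h.1.2 h.2.2)
    have := mul_le_mul_of_nonneg_left hcount hq0.le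
    linarith
  have hs : 0 < e ^ 2 / q := by positivity
  have key := sum_le_of_variance (subset_univ F) i (#P / q) hs
  have hU : ((#(univ : Finset (K × K)) : ℕ) : ℝ) = q ^ 2 := by
    rw [card_univ, Fintype.card_prod, hq]; push_cast; ring
  rw [hmean, hU] at key
  have hb : ∑ x : K × K, i x ^ 2 - 2 * (#P / q) * (q * #P) + (#P / q) ^ 2 * q ^ 2 ≤
      q * (5 * (q * e ^ 2) + 3 / 2 * (e ^ 4 / q ^ 2)) := by
    have h3 : 2 * (#P / q) * (q * #P) = 2 * (#P : ℝ) ^ 2 := by field_simp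
    have h4 : (#P / q) ^ 2 * q ^ 2 = (#P : ℝ) ^ 2 := by field_simp
    linarith
  have hb' := div_le_div_of_nonneg_right hb (by positivity : 0 ≤ 2 * (e ^ 2 / q))
  have h5 : q * (5 * (q * e ^ 2) + 3 / 2 * (e ^ 4 / q ^ 2)) / (2 * (e ^ 2 / q)) =
      5 / 2 * q ^ 3 + 3 / 4 * e ^ 2 := by field_simp; ring
  have h6 : #P / q * #F ≤ e ^ 2 / q * #F := by gcongr
  have h7 : e ^ 2 / q * #F = #F * e ^ 2 / q := by ring
  linarith

/-- A point equidistant from two points at distance zero from each other is either at distance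
zero from both, or the two points agree. -/
lemma eq_of_isotropic_base (h2 : (2 : K) ≠ 0) {x b c : K × K} (hbc : fdist b c = 0)
    (h : fdist x b = fdist x c) (h0 : fdist x c ≠ 0) : b = c := by
  obtain ⟨⟨x1, x2⟩, ⟨b1, b2⟩, ⟨c1, c2⟩⟩ := x, b, c
  simp only [fdist] at *
  have ho : (b1 - c1) * (x1 - c1) + (b2 - c2) * (x2 - c2) = 0 := by
    apply mul_left_cancel₀ h2
    linear_combination hbc - h
  have e1 : (b1 - c1) ^ 2 = 0 := by
    apply mul_right_cancel₀ h0
    linear_combination ((b1 - c1) * (x1 - c1) - (b2 - c2) * (x2 - c2)) * ho +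
      (x2 - c2) ^ 2 * hbc
  have e2 : (b2 - c2) ^ 2 = 0 := by linear_combination hbc - e1
  exact Prod.ext (sub_eq_zero.mp (pow_eq_zero_iff two_ne_zero |>.mp e1))
    (sub_eq_zero.mp (pow_eq_zero_iff two_ne_zero |>.mp e2))

open scoped Classical in
/-- Cauchy–Schwarz: few pinned distances at `x` force many isosceles triangles with apex `x`. -/
lemma many_isosceles (h2 : (2 : K) ≠ 0) (E : Finset (K × K)) (x : K × K)
    (hE : 4 * Fintype.card K ≤ #E) :
    (#E : ℝ) ^ 2 / 4 ≤ (pinnedDist x (E : Set (K × K))).ncard *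
      (#E + isoCount E x : ℝ) := by
  set E' := E.filter (fun b => fdist x b ≠ 0) with hE'
  set D : Finset K := E'.image (fun b => fdist x b) with hD
  have hDc : (pinnedDist x (E : Set (K × K))).ncard = #D := by
    rw [← Set.ncard_coe_finset]
    congr 1
    ext d
    simp only [pinnedDist, hD, hE', Set.mem_ofPred_eq, mem_coe, mem_image, mem_filter]
    constructor
    · rintro ⟨h0, y, hy, rfl⟩; exact ⟨y, ⟨hy, h0⟩, rfl⟩
    · rintro ⟨y, ⟨hy, h0⟩, rfl⟩; exact ⟨h0, y, hy, rfl⟩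
  rw [hDc]
  have hcard : #E ≤ 2 * #E' := by
    have h1 : #(E.filter (fun b => ¬ fdist x b ≠ 0)) ≤ #(circ K 0) := by
      refine card_le_card_of_injOn (fun b => x - b) ?_ ?_
      · intro b hb
        have hb := (mem_filter.mp hb).2
        push Not at hb
        exact mem_circ.mpr hb
      · intro b _ c _ h
        exact sub_right_injective h
    have h3 := card_filter_add_card_filter_not (s := E) (fun b => fdist x b ≠ 0)
    have h4 := circ_card_le (0 : K)
    rw [← hE'] at h3
    omega
  have hcardR : (#E : ℝ) ≤ 2 * #E' := by exact_mod_cast hcard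
  have hsum : (#E' : ℝ) = ∑ d ∈ D, (#{b ∈ E' | fdist x b = d} : ℝ) := by
    exact_mod_cast card_eq_sum_card_image (fun b => fdist x b) E'
  have hcs : (#E' : ℝ) ^ 2 ≤ #D * ∑ d ∈ D, (#{b ∈ E' | fdist x b = d} : ℝ) ^ 2 := by
    rw [hsum]; exact sq_sum_le_card_mul_sum_sq
  have hpairs : ∑ d ∈ D, #{b ∈ E' | fdist x b = d} ^ 2 ≤
      #{j ∈ E' ×ˢ E' | fdist x j.1 = fdist x j.2} := by
    have : ∀ j ∈ (E' ×ˢ E').filter (fun j => fdist x j.1 = fdist x j.2), fdist x j.1 ∈ D := by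
      intro j hj
      exact mem_image_of_mem _ (mem_product.mp (mem_filter.mp hj).1).1
    rw [card_eq_sum_card_fiberwise this]
    refine sum_le_sum fun d _ => ?_
    rw [pow_two, ← card_product]
    refine card_le_card fun j hj => ?_
    have hj := mem_product.mp hj
    have h3 := mem_filter.mp hj.1
    have h4 := mem_filter.mp hj.2
    exact mem_filter.mpr ⟨mem_filter.mpr ⟨mem_product.mpr ⟨h3.1, h4.1⟩, h3.2.trans h4.2.symm⟩,
      h3.2⟩
  have hsplit : #{j ∈ E' ×ˢ E' | fdist x j.1 = fdist x j.2} ≤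
      #E + isoCount E x := by
    have : (E' ×ˢ E').filter (fun j => fdist x j.1 = fdist x j.2) ⊆
        E.diag ∪ (E ×ˢ E).filter (fun j => fdist j.1 j.2 ≠ 0 ∧ fdist x j.1 = fdist x j.2) := by
      intro j hj
      have hj := mem_filter.mp hj
      have h3 := mem_product.mp hj.1
      have h4 := mem_filter.mp h3.1
      have h5 := mem_filter.mp h3.2
      rw [mem_union]
      by_cases h : fdist j.1 j.2 = 0
      · left
        exact mem_diag.mpr ⟨h4.1, eq_of_isotropic_base h2 h hj.2 h5.2⟩
      · right
        exact mem_filter.mpr ⟨mem_product.mpr ⟨h4.1, h5.1⟩, h, hj.2⟩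
    have := (card_le_card this).trans (card_union_le _ _)
    rw [diag_card] at this
    refine this.trans (le_of_eq ?_)
    simp only [isoCount]
  have hR : ∑ d ∈ D, (#{b ∈ E' | fdist x b = d} : ℝ) ^ 2 ≤
      #E + isoCount E x := by
    exact_mod_cast hpairs.trans hsplit
  have h6 : (#E : ℝ) ^ 2 / 4 ≤ (#E' : ℝ) ^ 2 := by
    have : (0 : ℝ) ≤ #E := by positivity
    nlinarith
  exact (h6.trans hcs).trans (mul_le_mul_of_nonneg_left hR (by positivity))

end Incidences

/-- **Lemma 2.4.** Let `p` be an odd prime and `E, F ⊆ 𝔽_p²` with `|E| ≥ 4p`, `|F| ≥ 8p` and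
`|F||E|² ≥ 64 p⁴`. Then there is a subset `F' ⊆ F` with `|F'| ≥ |F|/24` such that
`|Δ*_x(E)| ≥ p/24` for every `x ∈ F'`. -/
theorem pinned_distances_large (p : ℕ) (hp : p.Prime) (hodd : Odd p)
    (E F : Finset (ZMod p × ZMod p))
    (hE : 4 * p ≤ E.card) (hF : 8 * p ≤ F.card) (hFE : 64 * p ^ 4 ≤ F.card * E.card ^ 2) :
    ∃ F' ⊆ F, (F.card : ℝ) / 24 ≤ (F'.card : ℝ) ∧
      ∀ x ∈ F', (p : ℝ) / 24 ≤ ((pinnedDist x (E : Set (ZMod p × ZMod p))).ncard : ℝ) := by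
  classical
  have : Fact p.Prime := ⟨hp⟩
  have h2 : (2 : ZMod p) ≠ 0 := by
    intro h
    have h3 : ((2 : ℕ) : ZMod p) = 0 := by exact_mod_cast h
    rw [ZMod.natCast_eq_zero_iff] at h3
    have h4 := (Nat.prime_dvd_prime_iff_eq hp Nat.prime_two).mp h3
    subst h4
    exact absurd hodd (by decide)
  have hcard : Fintype.card (ZMod p) = p := ZMod.card p
  have hp0 : 0 < p := hp.pos
  refine ⟨F.filter (fun x => (p : ℝ) / 24 ≤
    ((pinnedDist x (E : Set (ZMod p × ZMod p))).ncard : ℝ)), filter_subset _ _, ?_,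
    fun x hx => (mem_filter.mp hx).2⟩
  by_contra hcon
  push Not at hcon
  set G := F.filter (fun x => (p : ℝ) / 24 ≤
    ((pinnedDist x (E : Set (ZMod p × ZMod p))).ncard : ℝ)) with hG
  set B := F.filter (fun x => ¬ (p : ℝ) / 24 ≤
    ((pinnedDist x (E : Set (ZMod p × ZMod p))).ncard : ℝ)) with hB
  have hGB : (#G : ℝ) + #B = #F := by
    exact_mod_cast card_filter_add_card_filter_not (s := F) _
  have hiso := isosceles_le h2 E F (by omega)
  rw [hcard] at hiso
  set I : ZMod p × ZMod p → ℝ := fun x =>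
    (isoCount E x : ℝ) with hI
  have hq0 : (0 : ℝ) < p := by exact_mod_cast hp0
  have hER : 4 * (p : ℝ) ≤ #E := by exact_mod_cast hE
  have hFR : 8 * (p : ℝ) ≤ #F := by exact_mod_cast hF
  have hFER : 64 * (p : ℝ) ^ 4 ≤ #F * (#E : ℝ) ^ 2 := by exact_mod_cast hFE
  set q : ℝ := (p : ℝ)
  set e : ℝ := (#E : ℝ) with he
  set f : ℝ := (#F : ℝ) with hf
  have he0 : 0 < e := by linarith
  have hf0 : 0 < f := by linarith
  have hbad : ∀ x ∈ B, 6 * (e ^ 2 / q) ≤ e + I x := by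
    intro x hx
    have hx := (mem_filter.mp hx).2
    push Not at hx
    have := many_isosceles h2 E x (by rw [hcard]; exact hE)
    have hI0 : 0 ≤ e + I x := by positivity
    have h3 := this.trans (mul_le_mul_of_nonneg_right hx.le hI0)
    have h4 : 6 * (e ^ 2 / q) = e ^ 2 / 4 * (24 / q) := by field_simp; norm_num
    have h5 : q / 24 * (e + I x) * (24 / q) = e + I x := by field_simp
    rw [h4, ← h5]
    exact mul_le_mul_of_nonneg_right h3 (by positivity)
  have hlow : #B * (6 * (e ^ 2 / q)) ≤ f * e + ∑ x ∈ F, I x := by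
    have h3 := card_nsmul_le_sum B _ _ hbad
    rw [nsmul_eq_mul] at h3
    have h4 : ∑ x ∈ B, (e + I x) ≤ ∑ x ∈ F, (e + I x) :=
      sum_le_sum_of_subset_of_nonneg (filter_subset _ _) fun _ _ _ => by positivity
    rw [sum_add_distrib (s := F), sum_const, nsmul_eq_mul] at h4
    linarith
  -- everything is compared with `X = #F * #E ^ 2 / p`
  set X : ℝ := f * e ^ 2 / q with hX
  have hX0 : 0 < X := by positivity
  have t1 : f * e ≤ X / 4 := by
    rw [hX, div_div, le_div_iff₀ (by positivity)]
    nlinarith [mul_pos hf0 he0]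
  have t2 : q ^ 3 ≤ X / 64 := by
    rw [hX, div_div, le_div_iff₀ (by positivity)]
    linarith
  have t3 : e ^ 2 ≤ X / 8 := by
    rw [hX, div_div, le_div_iff₀ (by positivity)]
    nlinarith [pow_pos he0 2]
  have t4 : 23 / 24 * f * (6 * (e ^ 2 / q)) ≤ #B * (6 * (e ^ 2 / q)) := by
    apply mul_le_mul_of_nonneg_right _ (by positivity)
    linarith
  have t5 : 23 / 24 * f * (6 * (e ^ 2 / q)) = 23 / 4 * X := by rw [hX]; ring
  linarith
end

section
/- Let p be an odd prime, let T be a tree with k ≥ 1 edges and v a vertex of T. Let E, F ⊆ 𝔽_p² with |E| = |F| ≥ 4·2^{16k}·p^{4/3}. Then there exist a constant c = c(k) > 0 (independent of E, F, p) and a subset E′ ⊆ E with |E′| ≥ |E|/2^{8k} such that for every x ∈ E′ the number of distinct trees (T′, x) that are isomorphic to (T, v) and have all vertices other than x in F is at least c·p^k. -/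
section FinitePlane

open Finset

variable {F : Type*} [Field F] [Fintype F] [DecidableEq F]

/-! ### Incidences and variances in a finite plane -/

/-- The determinant form on `F × F`; `crs n a = 0` says that `a` is parallel to `n`. -/
def crs (n a : F × F) : F := n.1 * a.2 - n.2 * a.1

/-- The standard bilinear form on `F × F`. -/
def dt (n a : F × F) : F := n.1 * a.1 + n.2 * a.2

omit [Fintype F] [DecidableEq F] in
lemma ne_zero_cases {n : F × F} (hn : n ≠ 0) : n.1 ≠ 0 ∨ n.2 ≠ 0 := by
  by_contra! h
  exact hn (Prod.ext h.1 h.2)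

/-- A line has `q` points. -/
lemma card_dt_eq (n : F × F) (hn : n ≠ 0) (s : F) :
    #{x : F × F | dt n x = s} = Fintype.card F := by
  rw [← Finset.card_univ]
  symm
  by_cases h : n.1 = 0
  · have h2 : n.2 ≠ 0 := (ne_zero_cases hn).resolve_left (by simpa using h)
    refine Finset.card_bij (fun t _ => (t, s / n.2)) ?_ ?_ ?_
    · intro t _
      simp only [mem_filter, mem_univ, true_and]
      simp only [dt, h]
      field_simp
      ring
    · intro t _ t' _ e
      exact (Prod.ext_iff.1 e).1
    · intro x hx
      simp only [mem_filter, mem_univ, true_and] at hx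
      simp only [dt, h] at hx
      refine ⟨x.1, mem_univ _, Prod.ext rfl ?_⟩
      simp only
      rw [← hx]
      field_simp
      ring
  · refine Finset.card_bij (fun t _ => ((s - n.2 * t) / n.1, t)) ?_ ?_ ?_
    · intro t _
      simp only [mem_filter, mem_univ, true_and]
      simp only [dt]
      field_simp
      ring
    · intro t _ t' _ e
      exact (Prod.ext_iff.1 e).2
    · intro x hx
      simp only [mem_filter, mem_univ, true_and] at hx
      simp only [dt] at hx
      refine ⟨x.2, mem_univ _, Prod.ext ?_ rfl⟩
      simp only
      rw [← hx]
      field_simp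
      ring

lemma card_crs_eq_zero (a : F × F) (ha : a ≠ 0) :
    #{n : F × F | crs n a = 0} = Fintype.card F := by
  rw [← card_dt_eq (a.2, -a.1) (by
    intro h
    rw [Prod.ext_iff] at h
    exact ha (Prod.ext (by simpa using h.2) h.1)) 0]
  congr 1
  ext n
  simp only [mem_filter, mem_univ, true_and]
  simp only [crs, dt]
  constructor <;> intro h <;> linear_combination h

/-- Counting pairs with equal values fibre by fibre. -/
lemma sum_fiber_mul {α β γ : Type*} [Fintype γ] [DecidableEq γ] (A : Finset α) (B : Finset β)
    (g : α → γ) (h : β → γ) :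
    ∑ σ, #{a ∈ A | g a = σ} * #{b ∈ B | h b = σ} = #{z ∈ A ×ˢ B | g z.1 = h z.2} := by
  rw [Finset.card_eq_sum_card_fiberwise (f := fun z => g z.1) (t := univ) (by simp)]
  refine Finset.sum_congr rfl fun σ _ => ?_
  rw [← Finset.card_product]
  congr 1
  ext z
  simp only [mem_product, mem_filter]
  constructor
  · rintro ⟨⟨h1, h2⟩, h3, h4⟩
    exact ⟨⟨⟨h1, h3⟩, h2.trans h4.symm⟩, h2⟩
  · rintro ⟨⟨⟨h1, h3⟩, h4⟩, h2⟩
    exact ⟨⟨h1, h2⟩, h3, h4.symm.trans h2⟩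

lemma sum_fiber {α γ : Type*} [Fintype γ] [DecidableEq γ] (A : Finset α) (g : α → γ) :
    ∑ σ, #{a ∈ A | g a = σ} = #A :=
  (Finset.card_eq_sum_card_fiberwise (f := g) (t := univ) (by simp)).symm

/-- A second moment bound for point-line incidences: in a plane with `q ^ 2` points and lines of
`q` points, the incidence function of a family of lines has variance controlled by the number of
pairs of lines sharing more than one point. -/
lemma incidence_var {α β : Type*} [Fintype α] (P : Finset β) (R : α → β → Prop)
    [∀ x b, Decidable (R x b)] (q : ℕ) (hq : 0 < q) (hα : Fintype.card α = q ^ 2)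
    (hR : ∀ b ∈ P, #{x | R x b} = q) :
    ∑ x, ((#{b ∈ P | R x b} : ℝ) - (#P : ℝ) / q) ^ 2 ≤
      q * #{z ∈ P ×ˢ P | 1 < #{x | R x z.1 ∧ R x z.2}} := by
  have hq' : (q : ℝ) ≠ 0 := by positivity
  have h1 : ∑ x, (#{b ∈ P | R x b} : ℝ) = #P * q := by
    have : ∑ x, #{b ∈ P | R x b} = #P * q := by
      simp only [Finset.card_filter]
      rw [Finset.sum_comm]
      rw [Finset.sum_congr rfl (g := fun _ => q)]
      · simp
      · intro b hb
        rw [← Finset.card_filter]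
        exact hR b hb
    exact_mod_cast this
  have h2 : ∑ x, (#{b ∈ P | R x b} : ℝ) ^ 2 ≤
      (#P : ℝ) ^ 2 + q * #{z ∈ P ×ˢ P | 1 < #{x | R x z.1 ∧ R x z.2}} := by
    have : ∑ x, #{b ∈ P | R x b} ^ 2 ≤
        #P ^ 2 + q * #{z ∈ P ×ˢ P | 1 < #{x | R x z.1 ∧ R x z.2}} := by
      have e : ∑ x, #{b ∈ P | R x b} ^ 2 = ∑ z ∈ P ×ˢ P, #{x | R x z.1 ∧ R x z.2} := by
        simp only [Finset.card_filter _ (univ : Finset α)]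
        rw [Finset.sum_comm]
        refine Finset.sum_congr rfl fun x _ => ?_
        rw [← Finset.card_filter, sq, ← Finset.card_product]
        congr 1
        ext z
        simp only [mem_product, mem_filter]
        tauto
      rw [e]
      calc _ ≤ ∑ z ∈ P ×ˢ P, (1 + q * if 1 < #{x | R x z.1 ∧ R x z.2} then 1 else 0) := by
            refine Finset.sum_le_sum fun z hz => ?_
            split_ifs with h
            · have : #{x | R x z.1 ∧ R x z.2} ≤ #{x | R x z.1} := by
                refine Finset.card_le_card fun x => ?_
                simp only [mem_filter]
                tauto
              rw [hR z.1 (mem_product.1 hz).1] at this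
              omega
            · omega
        _ = _ := by
            rw [Finset.sum_add_distrib, ← Finset.mul_sum, ← Finset.card_filter]
            simp [sq]
    exact_mod_cast this
  have h3 : ∑ x, ((#{b ∈ P | R x b} : ℝ) - (#P : ℝ) / q) ^ 2 =
      ∑ x, (#{b ∈ P | R x b} : ℝ) ^ 2 - 2 * (#P / q) * ∑ x, (#{b ∈ P | R x b} : ℝ)
        + q ^ 2 * (#P / q) ^ 2 := by
    rw [Finset.mul_sum, ← Finset.sum_sub_distrib]
    have : (q : ℝ) ^ 2 * (#P / q) ^ 2 = ∑ _x : α, ((#P : ℝ) / q) ^ 2 := by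
      simp [hα]
    rw [this, ← Finset.sum_add_distrib]
    exact Finset.sum_congr rfl fun x _ => by ring
  rw [h3, h1]
  have : 2 * (#P / q : ℝ) * (#P * q) = 2 * (#P : ℝ) ^ 2 := by field_simp
  have h4 : (q : ℝ) ^ 2 * (#P / q) ^ 2 = (#P : ℝ) ^ 2 := by field_simp
  rw [this, h4]
  linarith

/-- The parallelogram-law comparison that replaces `∑ u v` by its mean and two variances. -/
lemma sum_mul_le_var {ι : Type*} [Fintype ι] [Nonempty ι] (u v : ι → ℝ) :
    ∑ i, u i * v i ≤ (∑ i, u i) * (∑ i, v i) / Fintype.card ι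
      + (∑ i, u i ^ 2 - (∑ i, u i) ^ 2 / Fintype.card ι) / 2
      + (∑ i, v i ^ 2 - (∑ i, v i) ^ 2 / Fintype.card ι) / 2 := by
  have h := sq_sum_le_card_mul_sum_sq (s := (univ : Finset ι)) (f := fun i => u i - v i)
  have e : ∑ i, (u i - v i) ^ 2 = ∑ i, u i ^ 2 + ∑ i, v i ^ 2 - 2 * ∑ i, u i * v i := by
    rw [Finset.mul_sum, ← Finset.sum_add_distrib, ← Finset.sum_sub_distrib]
    exact Finset.sum_congr rfl fun x _ => by ring
  rw [e, Finset.sum_sub_distrib, Finset.card_univ] at h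
  have hc : (0 : ℝ) < Fintype.card ι := by exact_mod_cast Fintype.card_pos
  have h' := div_le_of_le_mul₀ hc.le (by
    rw [← e]; positivity) (h.trans_eq (mul_comm _ _))
  have : ((∑ i, u i) - ∑ i, v i) ^ 2 / (Fintype.card ι : ℝ) = (∑ i, u i) ^ 2 / Fintype.card ι +
    (∑ i, v i) ^ 2 / Fintype.card ι - 2 * ((∑ i, u i) * (∑ i, v i) / Fintype.card ι) := by ring
  rw [this] at h'
  linarith

/-- `q` times the variance of the number of points of `A` on a line parallel to `n`, that is
`∑ |A ∩ ℓ|² - |A|² / q` over the lines `ℓ` parallel to `n` (for `n ≠ 0`). -/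
noncomputable def lineVar (A : Finset (F × F)) (n : F × F) : ℝ :=
  ∑ σ, (#{a ∈ A | crs n a = σ} : ℝ) ^ 2 - (#A : ℝ) ^ 2 / Fintype.card F

lemma lineVar_nonneg (A : Finset (F × F)) (n : F × F) : 0 ≤ lineVar A n := by
  have h := sq_sum_le_card_mul_sum_sq (s := (univ : Finset F))
    (f := fun σ => (#{a ∈ A | crs n a = σ} : ℝ))
  have e : ∑ σ, (#{a ∈ A | crs n a = σ} : ℝ) = #A := by exact_mod_cast sum_fiber A (crs n)
  rw [e, Finset.card_univ] at h
  have hc : (0 : ℝ) < Fintype.card F := by exact_mod_cast Fintype.card_pos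
  rw [lineVar, sub_nonneg, div_le_iff₀ hc]
  linarith

/-- The variances over all `n` add up exactly, since two distinct points
have difference parallel to exactly `q` vectors `n`. -/
lemma sum_lineVar (A : Finset (F × F)) :
    ∑ n, lineVar A n = ((Fintype.card F : ℝ) ^ 2 - Fintype.card F) * #A := by
  set q := Fintype.card F with hq
  have hc : (0 : ℝ) < q := by exact_mod_cast Fintype.card_pos
  have h1 : ∑ n : F × F, ∑ σ, #{a ∈ A | crs n a = σ} ^ 2 + q * #A = q ^ 2 * #A + q * #A ^ 2 := by
    have e : ∑ n : F × F, ∑ σ, #{a ∈ A | crs n a = σ} ^ 2 =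
        ∑ a ∈ A, ∑ b ∈ A, #{n : F × F | crs n a = crs n b} := by
      simp only [sq, sum_fiber_mul]
      rw [← Finset.sum_product']
      simp only [Finset.card_filter _ (univ : Finset (F × F)), Finset.card_filter _ (A ×ˢ A)]
      rw [Finset.sum_comm]
    rw [e]
    have e2 : ∀ a ∈ A, ∑ b ∈ A, #{n : F × F | crs n a = crs n b} + q = q ^ 2 + q * #A := by
      intro a ha
      rw [← Finset.add_sum_erase A _ ha]
      have : ∑ b ∈ A.erase a, #{n : F × F | crs n a = crs n b} = ∑ b ∈ A.erase a, q := by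
        refine Finset.sum_congr rfl fun b hb => ?_
        rw [hq, ← card_crs_eq_zero (b - a) (sub_ne_zero.2 (Finset.ne_of_mem_erase hb))]
        congr 1
        ext n
        simp only [mem_filter, mem_univ, true_and]
        simp only [crs, Prod.fst_sub, Prod.snd_sub]
        constructor <;> intro h <;> linear_combination -h
      rw [this, Finset.sum_const, Finset.card_erase_of_mem ha]
      have hA : 0 < #A := Finset.card_pos.2 ⟨a, ha⟩
      obtain ⟨m, hm⟩ : ∃ m, #A = m + 1 := ⟨#A - 1, by omega⟩
      simp [hm, ← hq]
      ring
    calc _ = ∑ a ∈ A, (∑ b ∈ A, #{n : F × F | crs n a = crs n b} + q) := by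
          rw [Finset.sum_add_distrib]; simp [mul_comm]
      _ = ∑ a ∈ A, (q ^ 2 + q * #A) := Finset.sum_congr rfl e2
      _ = _ := by simp; ring
  have h1' : ∑ n : F × F, ∑ σ, (#{a ∈ A | crs n a = σ} : ℝ) ^ 2 + q * #A =
      q ^ 2 * #A + q * (#A : ℝ) ^ 2 := by exact_mod_cast h1
  simp only [lineVar]
  rw [Finset.sum_sub_distrib, Finset.sum_const, Finset.card_univ, Fintype.card_prod, ← hq,
    nsmul_eq_mul]
  push_cast
  have : (q : ℝ) * q * ((#A : ℝ) ^ 2 / q) = q * (#A : ℝ) ^ 2 := by field_simp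
  rw [this]
  linarith

/-! ### The bisector energy -/

/-- The linear reflection in the line through the origin orthogonal to `n`, applied to `δ`. It is
the identity when `n` is isotropic, where the quotient is `0`. -/
def mirror (n δ : F × F) : F × F := δ - (2 * dt n δ / dt n n) • n

/-- The points of `B` whose translate by `δ` is again in `B`. -/
def trs (B : Finset (F × F)) (δ : F × F) : Finset (F × F) := {a ∈ B | a + δ ∈ B}

omit [Fintype F] [DecidableEq F] in
lemma mirror_mirror (n δ : F × F) (hn : dt n n ≠ 0) : mirror n (mirror n δ) = δ := by
  have h : dt n (mirror n δ) = - dt n δ := by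
    have hn2 : n.1 ^ 2 + n.2 ^ 2 ≠ 0 := by simpa only [dt, sq] using hn
    simp only [mirror, dt, Prod.fst_sub, Prod.snd_sub, Prod.smul_fst, Prod.smul_snd, smul_eq_mul,
      ← sq]
    field_simp
    ring
  rw [mirror, h, mirror, sub_sub, ← add_smul]
  simp [← add_div]

omit [Fintype F] [DecidableEq F] in
lemma dt_mirror (n δ : F × F) (hn : dt n n ≠ 0) : dt (mirror n δ) (mirror n δ) = dt δ δ := by
  have hn2 : n.1 ^ 2 + n.2 ^ 2 ≠ 0 := by simpa only [dt, sq] using hn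
  simp only [mirror, dt, Prod.fst_sub, Prod.snd_sub, Prod.smul_fst, Prod.smul_snd, smul_eq_mul,
    ← sq]
  field_simp
  ring

omit [Fintype F] [DecidableEq F] in
/-- Reflection preserves the component across `n` and negates the one along `n`; for
non-isotropic `n` this determines it. -/
lemma eq_mirror (n δ ε : F × F) (hn : dt n n ≠ 0) (h1 : crs n ε = crs n δ)
    (h2 : dt n ε = - dt n δ) : ε = mirror n δ := by
  have hn2 : n.1 ^ 2 + n.2 ^ 2 ≠ 0 := by simpa only [dt, sq] using hn
  simp only [mirror, dt, crs, ← sq] at h1 h2 ⊢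
  refine Prod.ext ?_ ?_
  · simp only [Prod.fst_sub, Prod.smul_fst, smul_eq_mul]
    field_simp
    linear_combination n.1 * h2 - n.2 * h1
  · simp only [Prod.snd_sub, Prod.smul_snd, smul_eq_mul]
    field_simp
    linear_combination n.2 * h2 + n.1 * h1

omit [Fintype F] [DecidableEq F] in
/-- If two distinct points `x`, `y` are equidistant from `a, b` and from `c, d`, then the reflection
swapping `a` and `b` also swaps `c` and `d`, so it sends `c - a` to `d - b`. -/
lemma common_bisector (h2 : (2 : F) ≠ 0) {a b c d x y : F × F} (hxy : x ≠ y)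
    (hab : fdist a b ≠ 0) (hcd : fdist c d ≠ 0)
    (h1 : fdist x a = fdist x b) (h3 : fdist x c = fdist x d)
    (h4 : fdist y a = fdist y b) (h5 : fdist y c = fdist y d) :
    dt (b - a) (b - a) ≠ 0 ∧ crs (b - a) a = crs (b - a) b ∧
      crs (b - a) (d - b) = crs (b - a) (c - a) ∧
      dt (b - a) (d - b) = - dt (b - a) (c - a) := by
  have e1 : (y.1 - x.1) * (b.1 - a.1) + (y.2 - x.2) * (b.2 - a.2) = 0 := by
    apply mul_left_cancel₀ h2
    simp only [fdist] at h1 h4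
    linear_combination h4 - h1
  have e2 : (y.1 - x.1) * (d.1 - c.1) + (y.2 - x.2) * (d.2 - c.2) = 0 := by
    apply mul_left_cancel₀ h2
    simp only [fdist] at h3 h5
    linear_combination h5 - h3
  have e3 : (b.1 - a.1) * (d.2 - c.2) - (b.2 - a.2) * (d.1 - c.1) = 0 := by
    rcases ne_zero_cases (sub_ne_zero.2 hxy.symm) with h | h
    · apply mul_left_cancel₀ h
      simp only [Prod.fst_sub]
      linear_combination (d.2 - c.2) * e1 - (b.2 - a.2) * e2
    · apply mul_left_cancel₀ h
      simp only [Prod.snd_sub]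
      linear_combination (b.1 - a.1) * e2 - (d.1 - c.1) * e1
  have hn : (b.1 - a.1) * (b.1 - a.1) + (b.2 - a.2) * (b.2 - a.2) ≠ 0 := by
    intro h
    apply hab
    simp only [fdist]
    linear_combination h
  have e4 : (b.1 - a.1) * (d.1 - c.1) + (b.2 - a.2) * (d.2 - c.2) ≠ 0 := by
    intro h
    apply hcd
    apply mul_left_cancel₀ hn
    simp only [fdist]
    linear_combination ((b.1 - a.1) * (d.1 - c.1) + (b.2 - a.2) * (d.2 - c.2)) * h +
      ((b.1 - a.1) * (d.2 - c.2) - (b.2 - a.2) * (d.1 - c.1)) * e3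
  have e5 : (b.1 - a.1) * (c.1 + d.1 - 2 * x.1) + (b.2 - a.2) * (c.2 + d.2 - 2 * x.2) = 0 := by
    apply mul_left_cancel₀ e4
    simp only [fdist] at h3
    linear_combination - ((b.1 - a.1) * (b.1 - a.1) + (b.2 - a.2) * (b.2 - a.2)) * h3
      + ((b.2 - a.2) * (c.1 + d.1 - 2 * x.1) - (b.1 - a.1) * (c.2 + d.2 - 2 * x.2)) * e3
  simp only [dt, crs, Prod.fst_sub, Prod.snd_sub]
  refine ⟨hn, by ring, ?_, ?_⟩
  · linear_combination e3
  · simp only [fdist] at h1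
    linear_combination e5 + h1

/-- The pairs of points of `B` at nonzero distance. -/
def nzPairs (B : Finset (F × F)) : Finset ((F × F) × (F × F)) := {z ∈ B ×ˢ B | fdist z.1 z.2 ≠ 0}

/-- Pairs of pairs whose perpendicular bisectors meet in more than one point. -/
def bisQuads (B : Finset (F × F)) : Finset (((F × F) × (F × F)) × ((F × F) × (F × F))) :=
  {z ∈ nzPairs B ×ˢ nzPairs B |
    1 < #{x | fdist x z.1.1 = fdist x z.1.2 ∧ fdist x z.2.1 = fdist x z.2.2}}

/-- Each quadruple with a common bisector is seen by the `q - 1` multiples of its normal vector. -/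
lemma bisQuads_le (h2 : (2 : F) ≠ 0) (B : Finset (F × F)) :
    (Fintype.card F - 1) * #(bisQuads B) ≤
      ∑ n : F × F with dt n n ≠ 0, ∑ δ,
        #{w ∈ trs B δ ×ˢ trs B (mirror n δ) | crs n w.1 = crs n w.2} := by
  have step1 : ∀ z ∈ bisQuads B, Fintype.card F - 1 ≤
      #{n ∈ ({n | dt n n ≠ 0} : Finset (F × F)) | crs n z.1.1 = crs n z.1.2 ∧
        z.2.2 - z.1.2 = mirror n (z.2.1 - z.1.1)} := by
    rintro ⟨⟨a, b⟩, ⟨c, d⟩⟩ hz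
    simp only [bisQuads, nzPairs, mem_filter, mem_product] at hz
    obtain ⟨⟨⟨-, hab⟩, ⟨-, hcd⟩⟩, hx⟩ := hz
    obtain ⟨x, hx, y, hy, hxy⟩ := Finset.one_lt_card.1 hx
    simp only [mem_filter, mem_univ, true_and] at hx hy
    obtain ⟨g1, g2, g3, g4⟩ := common_bisector h2 hxy hab hcd hx.1 hx.2 hy.1 hy.2
    have hn : b - a ≠ 0 := by
      intro h
      rw [h] at g1
      simp [dt] at g1
    have : #((univ.erase (0 : F)).image fun t => t • (b - a)) = Fintype.card F - 1 := by
      rw [Finset.card_image_of_injective _ (smul_left_injective F hn),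
        Finset.card_erase_of_mem (mem_univ _), Finset.card_univ]
    rw [← this]
    refine Finset.card_le_card fun n hn => ?_
    simp only [mem_image, mem_erase, mem_univ, and_true] at hn
    obtain ⟨t, ht, rfl⟩ := hn
    have k1 : ∀ u, crs (t • (b - a)) u = t * crs (b - a) u := by intro u; simp [crs]; ring
    have k2 : ∀ u, dt (t • (b - a)) u = t * dt (b - a) u := by intro u; simp [dt]; ring
    have k3 : dt (t • (b - a)) (t • (b - a)) ≠ 0 := by
      have : dt (t • (b - a)) (t • (b - a)) = t * t * dt (b - a) (b - a) := by simp [dt]; ring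
      rw [this]
      exact mul_ne_zero (mul_ne_zero ht ht) g1
    simp only [mem_filter, mem_univ, true_and]
    refine ⟨k3, by rw [k1, k1, g2], eq_mirror _ _ _ k3 ?_ ?_⟩
    · rw [k1, k1, g3]
    · rw [k2, k2, g4]; ring
  calc (Fintype.card F - 1) * #(bisQuads B) = ∑ z ∈ bisQuads B, (Fintype.card F - 1) := by
        simp [mul_comm]
    _ ≤ _ := Finset.sum_le_sum step1
    _ = ∑ n : F × F with dt n n ≠ 0, #{z ∈ bisQuads B | crs n z.1.1 = crs n z.1.2 ∧
        z.2.2 - z.1.2 = mirror n (z.2.1 - z.1.1)} :=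
      Finset.sum_card_bipartiteAbove_eq_sum_card_bipartiteBelow
        (fun (z : ((F × F) × (F × F)) × ((F × F) × (F × F))) (n : F × F) =>
          crs n z.1.1 = crs n z.1.2 ∧ z.2.2 - z.1.2 = mirror n (z.2.1 - z.1.1))
    _ ≤ _ := by
      refine Finset.sum_le_sum fun n _ => ?_
      rw [← Finset.card_sigma]
      refine Finset.card_le_card_of_injOn
        (fun z => (⟨z.2.1 - z.1.1, z.1⟩ : Σ _ : F × F, (F × F) × (F × F))) ?_ ?_
      · rintro ⟨⟨a, b⟩, ⟨c, d⟩⟩ hz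
        simp only [bisQuads, nzPairs, mem_filter, mem_product, coe_filter, Set.mem_ofPred_eq] at hz
        obtain ⟨⟨⟨⟨⟨ha, hb⟩, -⟩, ⟨⟨hc, hd⟩, -⟩⟩, -⟩, h1, h3⟩ := hz
        simp only [coe_sigma, Set.mem_sigma_iff, mem_coe, mem_univ, mem_filter, mem_product, trs,
          true_and]
        rw [← h3]
        simp [ha, hb, hc, hd, h1]
      · rintro ⟨⟨a, b⟩, ⟨c, d⟩⟩ hz ⟨⟨a', b'⟩, ⟨c', d'⟩⟩ hz' e
        simp only [coe_filter, Set.mem_ofPred_eq] at hz hz'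
        have k := hz.2.2
        have k' := hz'.2.2
        simp only [Sigma.mk.injEq, heq_eq_eq, Prod.mk.injEq] at e
        obtain ⟨e1, rfl, rfl⟩ := e
        have e3 : c = c' := by simpa using e1
        subst e3
        rw [← k'] at k
        have : d = d' := by simpa using k
        rw [this]

omit [Fintype F] in
lemma card_trs (B : Finset (F × F)) (δ : F × F) :
    #(trs B δ) = #{z ∈ B ×ˢ B | z.2 - z.1 = δ} := by
  refine Finset.card_bij (fun a _ => (a, a + δ)) ?_ ?_ ?_
  · intro a ha
    simpa [trs] using ha
  · intro a _ b _ e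
    exact (Prod.ext_iff.1 e).1
  · rintro ⟨a, b⟩ h
    simp only [mem_filter, mem_product] at h
    obtain ⟨⟨ha, hb⟩, rfl⟩ := h
    exact ⟨a, by simp [trs, ha, hb], by simp⟩

lemma sum_card_trs (B : Finset (F × F)) : ∑ δ, #(trs B δ) = #B ^ 2 := by
  simp only [card_trs]
  rw [sum_fiber, Finset.card_product, sq]

omit [Fintype F] in
lemma card_trs_zero (B : Finset (F × F)) : #(trs B 0) = #B := by
  congr 1
  ext a
  simp [trs]

/-- For fixed `n`, the count of reflected pairs is at most its mean plus the variances along the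
lines parallel to `n`. -/
lemma refl_count_le (B : Finset (F × F)) (n : F × F) (hn : dt n n ≠ 0) :
    ∑ δ, (#{w ∈ trs B δ ×ˢ trs B (mirror n δ) | crs n w.1 = crs n w.2} : ℝ) ≤
      (∑ δ, (#(trs B δ) : ℝ) * #(trs B (mirror n δ))) / Fintype.card F +
        ∑ δ, lineVar (trs B δ) n := by
  have key : ∀ δ, (#{w ∈ trs B δ ×ˢ trs B (mirror n δ) | crs n w.1 = crs n w.2} : ℝ) ≤
      (#(trs B δ) : ℝ) * #(trs B (mirror n δ)) / Fintype.card F + lineVar (trs B δ) n / 2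
        + lineVar (trs B (mirror n δ)) n / 2 := by
    intro δ
    have h := sum_mul_le_var (fun σ : F => (#{a ∈ trs B δ | crs n a = σ} : ℝ))
      (fun σ : F => (#{a ∈ trs B (mirror n δ) | crs n a = σ} : ℝ))
    have e1 := sum_fiber_mul (trs B δ) (trs B (mirror n δ)) (crs n) (crs n)
    have e2 : ∀ A : Finset (F × F), ∑ σ, (#{a ∈ A | crs n a = σ} : ℝ) = #A := fun A => by
      exact_mod_cast sum_fiber A (crs n)
    rw [← e1]
    push_cast
    rw [e2, e2] at h
    exact h
  have hinv : ∑ δ, lineVar (trs B (mirror n δ)) n = ∑ δ, lineVar (trs B δ) n :=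
    Function.Bijective.sum_comp (Function.Involutive.bijective fun δ => mirror_mirror n δ hn)
      (fun δ => lineVar (trs B δ) n)
  calc _ ≤ _ := Finset.sum_le_sum fun δ _ => key δ
    _ = _ := by
      rw [Finset.sum_add_distrib, Finset.sum_add_distrib, ← Finset.sum_div, ← Finset.sum_div,
        ← Finset.sum_div, hinv]
      ring

/-- The number of quadruples `(a, c), (b, d)` of points of `B` with `‖a - c‖ = ‖b - d‖`. -/
def distEnergy (B : Finset (F × F)) : ℕ :=
  #{w ∈ (B ×ˢ B) ×ˢ (B ×ˢ B) | fdist w.1.1 w.1.2 = fdist w.2.1 w.2.2}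

omit [Field F] in
lemma sum_fiber_weight {α γ : Type*} [Fintype γ] [DecidableEq γ] (A : Finset α) (g : α → γ)
    (G : γ → ℕ) : ∑ σ, #{a ∈ A | g a = σ} * G σ = ∑ a ∈ A, G (g a) := by
  simp only [Finset.card_filter, Finset.sum_mul]
  rw [Finset.sum_comm]
  refine Finset.sum_congr rfl fun a _ => ?_
  simp

/-- Unless `δ = δ' = 0`, at most `q` vectors `n` reflect `δ` to `δ'`, because `n` must be parallel
to `δ - δ'`, or orthogonal to `δ` when `δ = δ'`. -/
lemma card_refl_le (h2 : (2 : F) ≠ 0) (δ δ' : F × F) :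
    #{n ∈ ({n | dt n n ≠ 0} : Finset (F × F)) | mirror n δ = δ'} ≤
      (if dt δ δ = dt δ' δ' then Fintype.card F else 0) +
        Fintype.card F ^ 2 * if δ = 0 ∧ δ' = 0 then 1 else 0 := by
  by_cases h : dt δ δ = dt δ' δ'
  · rw [if_pos h]
    by_cases h0 : δ = 0 ∧ δ' = 0
    · rw [if_pos h0]
      refine (Finset.card_le_univ _).trans ?_
      rw [Fintype.card_prod]
      nlinarith
    · rw [if_neg h0]
      by_cases hd : δ = δ'
      · subst hd
        have hd0 : δ ≠ 0 := by tauto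
        rw [mul_zero, add_zero, ← card_dt_eq δ hd0 0]
        refine Finset.card_le_card fun n hn => ?_
        simp only [mem_filter, mem_univ, true_and] at hn ⊢
        obtain ⟨hn, h1⟩ := hn
        rw [mirror, sub_eq_self, smul_eq_zero] at h1
        have hn0 : n ≠ 0 := by
          rintro rfl
          simp [dt] at hn
        have := h1.resolve_right hn0
        rw [div_eq_zero_iff] at this
        have := (mul_eq_zero.1 (this.resolve_right hn)).resolve_left h2
        rw [← this]
        simp [dt]
        ring
      · rw [mul_zero, add_zero, ← card_crs_eq_zero (δ - δ') (sub_ne_zero.2 hd)]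
        refine Finset.card_le_card fun n hn => ?_
        simp only [mem_filter, mem_univ, true_and] at hn ⊢
        rw [← hn.2, mirror, sub_sub_cancel]
        simp [crs]
        ring
  · rw [Finset.card_eq_zero.2]
    · positivity
    · rw [Finset.filter_eq_empty_iff]
      rintro n hn rfl
      simp only [mem_filter, mem_univ, true_and] at hn
      exact h (dt_mirror n δ hn).symm

/-- The mean values in `refl_count_le` add up to the distance energy: `δ` is reflected to `δ'` only
if the two have equal length. -/
lemma refl_main_le (h2 : (2 : F) ≠ 0) (B : Finset (F × F)) :
    ∑ n : F × F with dt n n ≠ 0, ∑ δ, #(trs B δ) * #(trs B (mirror n δ)) ≤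
      Fintype.card F * distEnergy B + Fintype.card F ^ 2 * #B ^ 2 := by
  set q := Fintype.card F
  calc _ = ∑ δ, ∑ n : F × F with dt n n ≠ 0, #(trs B δ) * #(trs B (mirror n δ)) :=
        Finset.sum_comm
    _ = ∑ δ, #(trs B δ) * ∑ δ', #{n ∈ ({n | dt n n ≠ 0} : Finset (F × F)) | mirror n δ = δ'}
          * #(trs B δ') := by
        refine Finset.sum_congr rfl fun δ _ => ?_
        rw [← Finset.mul_sum, sum_fiber_weight]
    _ ≤ ∑ δ, #(trs B δ) * ∑ δ', ((if dt δ δ = dt δ' δ' then q else 0) +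
          q ^ 2 * if δ = 0 ∧ δ' = 0 then 1 else 0) * #(trs B δ') := by
        gcongr with δ _ δ' _
        exact card_refl_le h2 δ δ'
    _ = q * ∑ δ, #(trs B δ) * ∑ δ', #(trs B δ') * (if dt δ δ = dt δ' δ' then 1 else 0) +
          q ^ 2 * ∑ δ, #(trs B δ) * ∑ δ', (if δ = 0 ∧ δ' = 0 then 1 else 0) * #(trs B δ') := by
        simp only [Finset.mul_sum]
        rw [← Finset.sum_add_distrib]
        refine Finset.sum_congr rfl fun δ _ => ?_
        rw [← Finset.sum_add_distrib]
        refine Finset.sum_congr rfl fun δ' _ => ?_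
        split_ifs <;> ring
    _ = _ := by
        congr 2
        · simp only [card_trs]
          simp only [sum_fiber_weight]
          rw [distEnergy, Finset.card_filter, Finset.sum_product (B ×ˢ B) (B ×ˢ B)]
          refine Finset.sum_congr rfl fun z _ => ?_
          refine Finset.sum_congr rfl fun w _ => ?_
          congr 1
          simp only [dt, fdist, Prod.fst_sub, Prod.snd_sub, eq_iff_iff]
          constructor <;> intro h <;> linear_combination h
        · rw [Finset.sum_eq_single 0, Finset.sum_eq_single 0]
          · simp [card_trs_zero, sq]
          · intro b _ hb; simp [hb]
          · simp
          · intro b _ hb; simp [hb]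
          · simp

/-- The bisector energy is at most about `distEnergy B / q + q |B|²`: quadruples with a common
bisector are counted by reflections, and the deviation from the mean in each direction `n` is
controlled by `lineVar`, whose sum over `n` is known exactly. -/
lemma bisQuads_bound (h2 : (2 : F) ≠ 0) (B : Finset (F × F)) :
    ((Fintype.card F : ℝ) - 1) * #(bisQuads B) ≤
      distEnergy B + Fintype.card F * (#B : ℝ) ^ 2 +
        ((Fintype.card F : ℝ) ^ 2 - Fintype.card F) * (#B : ℝ) ^ 2 := by
  set q := Fintype.card F with hq
  have hc : (0 : ℝ) < q := by exact_mod_cast Fintype.card_pos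
  have a1 : ((q : ℝ) - 1) * #(bisQuads B) ≤ ∑ n : F × F with dt n n ≠ 0, ∑ δ : F × F,
        (#{w ∈ trs B δ ×ˢ trs B (mirror n δ) | crs n w.1 = crs n w.2} : ℝ) := by
    have h1 : 1 ≤ q := Fintype.card_pos
    have := bisQuads_le h2 B
    rw [← hq] at this
    have t := (Nat.cast_le (α := ℝ)).2 this
    push_cast [Nat.cast_sub h1] at t
    exact t
  have a2 := Finset.sum_le_sum fun n (hn : n ∈ ({n | dt n n ≠ 0} : Finset (F × F))) =>
    refl_count_le B n (by simpa using hn)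
  rw [Finset.sum_add_distrib, ← Finset.sum_div, ← hq] at a2
  have a3 : (∑ n : F × F with dt n n ≠ 0, ∑ δ, (#(trs B δ) : ℝ) * #(trs B (mirror n δ))) ≤
      q * distEnergy B + q ^ 2 * (#B : ℝ) ^ 2 := by
    exact_mod_cast refl_main_le h2 B
  have a4 : ∑ n : F × F with dt n n ≠ 0, ∑ δ, lineVar (trs B δ) n ≤
      ((q : ℝ) ^ 2 - q) * (#B : ℝ) ^ 2 := by
    calc _ ≤ ∑ n : F × F, ∑ δ, lineVar (trs B δ) n := by
          refine Finset.sum_le_sum_of_subset_of_nonneg (Finset.filter_subset _ _) ?_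
          intro n _ _
          exact Finset.sum_nonneg fun δ _ => lineVar_nonneg _ _
      _ = ∑ δ, ((q : ℝ) ^ 2 - q) * #(trs B δ) := by
          rw [Finset.sum_comm]
          exact Finset.sum_congr rfl fun δ _ => sum_lineVar _
      _ = _ := by
          rw [← Finset.mul_sum]
          congr 1
          exact_mod_cast sum_card_trs B
  have a5 : (∑ n : F × F with dt n n ≠ 0, ∑ δ, (#(trs B δ) : ℝ) * #(trs B (mirror n δ))) / q ≤
      distEnergy B + q * (#B : ℝ) ^ 2 := by
    rw [div_le_iff₀ hc]
    linarith
  linarith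

/-! ### Isosceles triangles and pinned distances -/

lemma card_bisector (h2 : (2 : F) ≠ 0) {a b : F × F} (hab : a ≠ b) :
    #{x : F × F | fdist x a = fdist x b} = Fintype.card F := by
  have hn : (2 : F) • (b - a) ≠ 0 := smul_ne_zero h2 (sub_ne_zero.2 hab.symm)
  rw [← card_dt_eq _ hn (dt b b - dt a a)]
  congr 1
  ext x
  simp only [mem_filter, mem_univ, true_and]
  simp only [fdist, dt, Prod.smul_fst, Prod.smul_snd, Prod.fst_sub, Prod.snd_sub, smul_eq_mul]
  constructor <;> intro h <;> linear_combination h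

/-- A circle of radius `0` lies on at most two isotropic lines. -/
lemma card_zero_circle_le (x : F × F) :
    #{b : F × F | fdist x b = 0} ≤ 2 * Fintype.card F := by
  by_cases hi : ∃ i : F, i ^ 2 = -1
  · obtain ⟨i, hi⟩ := hi
    have : ({b : F × F | fdist x b = 0} : Finset (F × F)) ⊆
        (univ.image fun t : F => (x.1 + i * t, x.2 + t)) ∪
          (univ.image fun t : F => (x.1 - i * t, x.2 + t)) := by
      intro b hb
      simp only [mem_filter, mem_univ, true_and] at hb
      have hb' : ((b.1 - x.1) - i * (b.2 - x.2)) * ((b.1 - x.1) + i * (b.2 - x.2)) = 0 := by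
        simp only [fdist] at hb
        linear_combination hb - (b.2 - x.2) ^ 2 * hi
      simp only [mem_union, mem_image, mem_univ, true_and]
      rcases mul_eq_zero.1 hb' with h | h
      · exact Or.inl ⟨b.2 - x.2, Prod.ext (by simp only; linear_combination -h) (by simp)⟩
      · exact Or.inr ⟨b.2 - x.2, Prod.ext (by simp only; linear_combination -h) (by simp)⟩
    refine (Finset.card_le_card this).trans ((Finset.card_union_le _ _).trans ?_)
    have h1 := Finset.card_image_le (s := (univ : Finset F))
      (f := fun t : F => (x.1 + i * t, x.2 + t))
    have h2 := Finset.card_image_le (s := (univ : Finset F))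
      (f := fun t : F => (x.1 - i * t, x.2 + t))
    rw [Finset.card_univ] at h1 h2
    omega
  · have : ({b : F × F | fdist x b = 0} : Finset (F × F)) ⊆ {x} := by
      intro b hb
      simp only [mem_filter, mem_univ, true_and] at hb
      simp only [fdist] at hb
      have h2 : x.2 - b.2 = 0 := by
        by_contra h
        refine hi ⟨(x.1 - b.1) / (x.2 - b.2), ?_⟩
        rw [div_pow, div_eq_iff (pow_ne_zero 2 h)]
        linear_combination hb
      have h1 : x.1 - b.1 = 0 := by
        rw [h2] at hb
        simpa using hb
      rw [mem_singleton]
      exact Prod.ext (by linear_combination -h1) (by linear_combination -h2)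
    have h := Finset.card_le_card this
    have : 0 < Fintype.card F := Fintype.card_pos
    rw [Finset.card_singleton] at h
    omega

/-- The number of isosceles triangles with apex `x`, base in `B`, and base of nonzero length. -/
def apexNz (B : Finset (F × F)) (x : F × F) : ℕ := #{z ∈ nzPairs B | fdist x z.1 = fdist x z.2}

omit [Fintype F] in
/-- If two distinct points at distance `0` are equidistant from `x`, they lie with `x` on an
isotropic line, so that the legs have length `0`. Isosceles triangles with nonzero legs thus have
a base that is nonzero or degenerate. -/
lemma isosceles_nz_le (h2 : (2 : F) ≠ 0) (B : Finset (F × F)) (x : F × F) :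
    #{z ∈ {b ∈ B | fdist x b ≠ 0} ×ˢ {b ∈ B | fdist x b ≠ 0} | fdist x z.1 = fdist x z.2} ≤
      apexNz B x + #B := by
  have : #(B.image fun b => (b, b)) = #B :=
    Finset.card_image_of_injective _ fun a b e => (Prod.ext_iff.1 e).1
  rw [apexNz, ← this]
  refine le_trans (Finset.card_le_card ?_) (Finset.card_union_le _ _)
  rintro ⟨a, c⟩ h
  simp only [mem_filter, mem_product] at h
  obtain ⟨⟨⟨ha, ha'⟩, hc, hc'⟩, h⟩ := h
  simp only [mem_union, mem_filter, mem_product, nzPairs, mem_image, Prod.mk.injEq]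
  by_cases hac : fdist a c = 0
  · right
    refine ⟨a, ha, rfl, ?_⟩
    by_contra hne
    apply ha'
    have e1 : (x.1 - a.1) * (c.1 - a.1) + (x.2 - a.2) * (c.2 - a.2) = 0 := by
      apply mul_left_cancel₀ h2
      simp only [fdist] at h hac
      linear_combination h + hac
    simp only [fdist] at hac ⊢
    rcases ne_zero_cases (sub_ne_zero.2 (Ne.symm hne)) with h0 | h0
    · simp only [Prod.fst_sub] at h0
      apply mul_left_cancel₀ (pow_ne_zero 2 h0)
      linear_combination (x.2 - a.2) ^ 2 * hac +
        ((x.1 - a.1) * (c.1 - a.1) - (x.2 - a.2) * (c.2 - a.2)) * e1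
    · simp only [Prod.snd_sub] at h0
      apply mul_left_cancel₀ (pow_ne_zero 2 h0)
      linear_combination (x.1 - a.1) ^ 2 * hac +
        ((x.2 - a.2) * (c.2 - a.2) - (x.1 - a.1) * (c.1 - a.1)) * e1
  · exact Or.inl ⟨⟨⟨ha, hc⟩, hac⟩, h⟩

lemma isosceles_le_s11 (h2 : (2 : F) ≠ 0) (B : Finset (F × F)) (x : F × F) :
    #{z ∈ B ×ˢ B | fdist x z.1 = fdist x z.2} ≤
      apexNz B x + #B + 4 * Fintype.card F ^ 2 := by
  have hz := card_zero_circle_le x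
  set Z : Finset (F × F) := {b : F × F | fdist x b = 0}
  have h4 : #(Z ×ˢ Z) ≤ 4 * Fintype.card F ^ 2 := by
    rw [Finset.card_product]
    calc _ ≤ (2 * Fintype.card F) * (2 * Fintype.card F) := Nat.mul_le_mul hz hz
      _ = _ := by ring
  refine le_trans ?_ (Nat.add_le_add (isosceles_nz_le h2 B x) h4)
  refine le_trans (Finset.card_le_card ?_) (Finset.card_union_le _ _)
  rintro ⟨a, c⟩ h
  simp only [mem_filter, mem_product] at h
  simp only [mem_union, mem_filter, mem_product, Z, mem_univ, true_and]
  obtain ⟨⟨ha, hc⟩, h⟩ := h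
  by_cases h0 : fdist x a = 0
  · exact Or.inr ⟨h0, h ▸ h0⟩
  · exact Or.inl ⟨⟨⟨ha, h0⟩, hc, h ▸ h0⟩, h⟩

/-- Cauchy-Schwarz in the common endpoint: the distance energy is at most `|B|` times the number of
isosceles triangles in `B`. -/
lemma distEnergy_le (B : Finset (F × F)) :
    distEnergy B ≤ #B * ∑ a ∈ B, #{z ∈ B ×ˢ B | fdist a z.1 = fdist a z.2} := by
  rw [distEnergy, ← sum_fiber_mul (B ×ˢ B) (B ×ˢ B) (fun z => fdist z.1 z.2)
    (fun z => fdist z.1 z.2)]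
  have e : ∀ ρ : F, #{z ∈ B ×ˢ B | fdist z.1 z.2 = ρ} = ∑ a ∈ B, #{c ∈ B | fdist a c = ρ} := by
    intro ρ
    simp only [Finset.card_filter, Finset.sum_product]
  calc _ = ∑ ρ : F, (∑ a ∈ B, #{c ∈ B | fdist a c = ρ}) ^ 2 := by
        refine Finset.sum_congr rfl fun ρ _ => ?_
        rw [e, sq]
    _ ≤ ∑ ρ : F, #B * ∑ a ∈ B, #{c ∈ B | fdist a c = ρ} ^ 2 :=
        Finset.sum_le_sum fun ρ _ => sq_sum_le_card_mul_sum_sq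
    _ = _ := by
        rw [← Finset.mul_sum, Finset.sum_comm]
        congr 1
        refine Finset.sum_congr rfl fun a _ => ?_
        rw [← sum_fiber_mul]
        exact Finset.sum_congr rfl fun ρ _ => sq _

/-- `apexNz B x` counts the bisectors through `x`, so its variance is controlled by the bisector
energy. -/
lemma apexNz_var (h2 : (2 : F) ≠ 0) (B : Finset (F × F)) :
    ∑ x, ((apexNz B x : ℝ) - (#(nzPairs B) : ℝ) / Fintype.card F) ^ 2 ≤
      Fintype.card F * #(bisQuads B) := by
  refine incidence_var (nzPairs B) (fun x z => fdist x z.1 = fdist x z.2) _ Fintype.card_pos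
    (by rw [Fintype.card_prod, sq]) ?_
  rintro ⟨a, b⟩ hz
  refine card_bisector h2 ?_
  intro (h : a = b)
  subst h
  simp only [nzPairs, mem_filter] at hz
  simp [fdist] at hz

lemma apexNz_sum (h2 : (2 : F) ≠ 0) (B X : Finset (F × F)) :
    (Fintype.card F * ∑ x ∈ X, (apexNz B x : ℝ) - #X * #(nzPairs B)) ^ 2 ≤
      Fintype.card F ^ 2 * (#X * (Fintype.card F * #(bisQuads B))) := by
  have hc : (Fintype.card F : ℝ) ≠ 0 := by exact_mod_cast Fintype.card_ne_zero
  have h := sq_sum_le_card_mul_sum_sq (s := X)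
    (f := fun x => (apexNz B x : ℝ) - (#(nzPairs B) : ℝ) / Fintype.card F)
  have h' : ∑ x ∈ X, ((apexNz B x : ℝ) - (#(nzPairs B) : ℝ) / Fintype.card F) ^ 2 ≤
      Fintype.card F * #(bisQuads B) :=
    (Finset.sum_le_sum_of_subset_of_nonneg (Finset.subset_univ X)
      (fun x _ _ => sq_nonneg _)).trans (apexNz_var h2 B)
  rw [Finset.sum_sub_distrib, Finset.sum_const, nsmul_eq_mul] at h
  have e : (Fintype.card F * ∑ x ∈ X, (apexNz B x : ℝ) - #X * #(nzPairs B)) ^ 2 =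
      (Fintype.card F : ℝ) ^ 2 *
        (∑ x ∈ X, (apexNz B x : ℝ) - #X * (#(nzPairs B) / Fintype.card F)) ^ 2 := by
    rw [← mul_pow]
    congr 1
    field_simp
  rw [e]
  gcongr
  exact h.trans (by gcongr)

/-- The bootstrap: if `B` is large, the number of nondegenerate isosceles triangles in `B` has the
expected order. Here `J` is that number, and the hypothesis combines the incidence bound with the
bound of the bisector energy by `J` itself. -/
lemma bootstrap {q b N J : ℝ} (hq : 0 < q) (hb : 16 * q ≤ b) (hb3 : 4096 * q ^ 4 ≤ b ^ 3)
    (hN : N ≤ b ^ 2)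
    (h : (q * J - b * N) ^ 2 ≤ q ^ 2 * (b * (2 * b * J + 2 * b ^ 3 + 10 * q ^ 2 * b ^ 2))) :
    q * J ≤ 2 * b ^ 3 := by
  by_contra! hY
  set Y := q * J with hYdef
  have hb0 : 0 < b := by linarith
  have hb30 : 0 < b ^ 3 := by positivity
  have hY0 : 0 < Y := by linarith
  have t1 : Y / 2 ≤ Y - b * N := by
    have : b * N ≤ b * b ^ 2 := by gcongr
    nlinarith
  have t2 : (Y / 2) ^ 2 ≤ (Y - b * N) ^ 2 := by gcongr
  have t3 : q ^ 2 * (b * (2 * b * J + 2 * b ^ 3 + 10 * q ^ 2 * b ^ 2)) =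
      2 * (q * b ^ 2) * Y + 2 * (q * b ^ 2) ^ 2 + 10 * (q ^ 4 * b ^ 3) := by
    rw [hYdef]; ring
  have t4 : q * b ^ 2 ≤ Y / 32 := by
    have : 16 * q * b ^ 2 ≤ b * b ^ 2 := by gcongr
    nlinarith
  have t5 : q ^ 4 * b ^ 3 ≤ Y ^ 2 / 16384 := by
    have s1 : 4096 * q ^ 4 * b ^ 3 ≤ b ^ 3 * b ^ 3 := by gcongr
    have s2 : b ^ 3 * b ^ 3 ≤ (Y / 2) * (Y / 2) := by
      gcongr <;> linarith
    nlinarith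
  have t6 : (q * b ^ 2) ^ 2 ≤ (Y / 32) ^ 2 := by gcongr
  have t7 : (q * b ^ 2) * Y ≤ (Y / 32) * Y := by gcongr
  have : 0 < Y ^ 2 := by positivity
  rw [t3] at h
  nlinarith

/-- Here `Y / q` is the number of nondegenerate isosceles triangles in `B` and `Z / q` the number of
those with base in `B` and apex in a set of `X` points. -/
lemma apex_numeric {q b N Z X Y : ℝ} (hq : 0 < q) (hb : 16 * q ≤ b) (hb3 : 4096 * q ^ 4 ≤ b ^ 3)
    (hX : 16 * q ≤ X) (hX3 : 4096 * q ^ 4 ≤ X ^ 3) (hN : N ≤ b ^ 2) (hY : Y ≤ 2 * b ^ 3)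
    (h : (Z - X * N) ^ 2 ≤ X * (q * (2 * b * Y + 2 * q * b ^ 3 + 10 * q ^ 3 * b ^ 2))) :
    Z ≤ 2 * X * b ^ 2 := by
  by_contra! hZ
  have hb0 : 0 < b := by linarith
  have hX0 : 0 < X := by linarith
  have t1 : X * b ^ 2 ≤ Z - X * N := by
    have : X * N ≤ X * b ^ 2 := by gcongr
    linarith
  have t2 : (X * b ^ 2) ^ 2 ≤ (Z - X * N) ^ 2 := by gcongr
  have t3 : 2 * b * Y ≤ 2 * b * (2 * b ^ 3) := by gcongr
  have t4 : X * (q * (2 * b * Y + 2 * q * b ^ 3 + 10 * q ^ 3 * b ^ 2)) ≤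
      X * (q * (2 * b * (2 * b ^ 3) + 2 * q * b ^ 3 + 10 * q ^ 3 * b ^ 2)) := by gcongr
  have t5 : X * (X * b ^ 4) ≤
      X * (q * (2 * b * (2 * b ^ 3) + 2 * q * b ^ 3 + 10 * q ^ 3 * b ^ 2)) := by
    calc _ = (X * b ^ 2) ^ 2 := by ring
      _ ≤ _ := t2.trans (h.trans t4)
  have t6 := le_of_mul_le_mul_left t5 hX0
  have s1 : 16 * q * b ^ 4 ≤ X * b ^ 4 := by gcongr
  have s2 : (16 * q) * (16 * q) * b ^ 3 ≤ X * b * b ^ 3 := by gcongr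
  have s3 : 4096 * q ^ 4 ≤ X * b ^ 2 := by
    refine le_of_pow_le_pow_left₀ (n := 3) (by norm_num) (by positivity) ?_
    calc (4096 * q ^ 4) ^ 3 = (4096 * q ^ 4) * (4096 * q ^ 4) ^ 2 := by ring
      _ ≤ X ^ 3 * (b ^ 3) ^ 2 := by gcongr
      _ = _ := by ring
  have s4 : 4096 * q ^ 4 * b ^ 2 ≤ X * b ^ 2 * b ^ 2 := by gcongr
  have : 0 < X * b ^ 4 := by positivity
  nlinarith

/-- **Pinned distances.** Among any set `X` of at least `16 q ^ (4/3)` points there is one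
determining at least `q / 12` distances to a given set `B` of at least `16 q ^ (4/3)` points. -/
lemma exists_pinned (h2 : (2 : F) ≠ 0) (B X : Finset (F × F))
    (hB : 4096 * (Fintype.card F : ℝ) ^ 4 ≤ (#B : ℝ) ^ 3)
    (hX : 4096 * (Fintype.card F : ℝ) ^ 4 ≤ (#X : ℝ) ^ 3) :
    ∃ x ∈ X, (Fintype.card F : ℝ) ≤ 12 * #(B.image (fdist x)) := by
  set q : ℝ := (Fintype.card F : ℝ) with hq
  have hq2 : 2 ≤ q := by
    have : 2 ≤ Fintype.card F := Fintype.one_lt_card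
    rw [hq]
    exact_mod_cast this
  have hq0 : 0 < q := by linarith
  have lin : ∀ {b : ℝ}, 0 ≤ b → 4096 * q ^ 4 ≤ b ^ 3 → 16 * q ≤ b := by
    intro b hb h
    refine le_of_pow_le_pow_left₀ (n := 3) (by norm_num) hb (le_trans ?_ h)
    have : q ^ 3 * 1 ≤ q ^ 3 * q := by gcongr; linarith
    nlinarith
  have hb := lin (by positivity) hB
  have hx := lin (by positivity) hX
  set b : ℝ := (#B : ℝ) with hbdef
  have hN : (#(nzPairs B) : ℝ) ≤ b ^ 2 := by
    have : #(nzPairs B) ≤ #B ^ 2 := by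
      rw [sq, ← Finset.card_product]
      exact Finset.card_filter_le _ _
    rw [hbdef]
    exact_mod_cast this
  set J : ℝ := ∑ x ∈ B, (apexNz B x : ℝ) with hJ
  have hD : (distEnergy B : ℝ) ≤ b * (J + b ^ 2 + 4 * q ^ 2 * b) := by
    have h := (distEnergy_le B).trans (Nat.mul_le_mul_left _
      (Finset.sum_le_sum fun a (_ : a ∈ B) => isosceles_le_s11 h2 B a))
    have h' := (Nat.cast_le (α := ℝ)).2 h
    push_cast [Finset.sum_add_distrib, Finset.sum_const, smul_eq_mul] at h'
    refine h'.trans_eq ?_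
    rw [← hJ, ← hq, ← hbdef]
    ring
  have hQ : q * #(bisQuads B) ≤ 2 * b * J + 2 * b ^ 3 + 10 * q ^ 2 * b ^ 2 := by
    have h := bisQuads_bound h2 B
    rw [← hq, ← hbdef] at h
    have : q * (#(bisQuads B) : ℝ) ≤ 2 * (q - 1) * #(bisQuads B) := by
      gcongr
      linarith
    nlinarith
  have hJ' : q * J ≤ 2 * b ^ 3 := by
    refine bootstrap hq0 hb hB hN ((apexNz_sum h2 B B).trans ?_)
    gcongr
  have hZ : q * ∑ x ∈ X, (apexNz B x : ℝ) ≤ 2 * #X * b ^ 2 := by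
    refine apex_numeric hq0 hb hB hx hX hN hJ' ((apexNz_sum h2 B X).trans ?_)
    calc _ ≤ q ^ 2 * (#X * (2 * b * J + 2 * b ^ 3 + 10 * q ^ 2 * b ^ 2)) := by
          gcongr
      _ = _ := by ring
  have hXne : X.Nonempty := by
    rw [← Finset.card_pos]
    have : (0 : ℝ) < #X := by linarith
    exact_mod_cast this
  obtain ⟨x, hxX, hxJ⟩ : ∃ x ∈ X, q * (apexNz B x : ℝ) ≤ 2 * b ^ 2 := by
    refine Finset.exists_le_of_sum_le hXne ?_
    rw [← Finset.mul_sum, Finset.sum_const, nsmul_eq_mul]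
    linarith
  refine ⟨x, hxX, ?_⟩
  -- Cauchy-Schwarz over the distances from `x`, after discarding the circle of radius `0`.
  set B' : Finset (F × F) := {y ∈ B | fdist x y ≠ 0}
  have c1 : b - 2 * q ≤ #B' := by
    have e : #{y ∈ B | fdist x y = 0} + #B' = #B := Finset.card_filter_add_card_filter_not _
    have e2 : #{y ∈ B | fdist x y = 0} ≤ 2 * Fintype.card F :=
      (Finset.card_le_card (Finset.filter_subset_filter _ (Finset.subset_univ B))).trans
        (card_zero_circle_le x)
    have e' : (#{y ∈ B | fdist x y = 0} : ℝ) + #B' = b := by rw [hbdef]; exact_mod_cast e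
    have e2' : (#{y ∈ B | fdist x y = 0} : ℝ) ≤ 2 * q := by rw [hq]; exact_mod_cast e2
    linarith
  have c2 : (#B' : ℝ) ^ 2 ≤ #(B.image (fdist x)) * (apexNz B x + b) := by
    have : #B' ^ 2 ≤ #(B.image (fdist x)) * (apexNz B x + #B) := by
      calc #B' ^ 2 = (∑ ρ ∈ B.image (fdist x), #{y ∈ B' | fdist x y = ρ}) ^ 2 := by
            rw [← Finset.card_eq_sum_card_fiberwise]
            intro y hy
            simp only [mem_coe]
            exact Finset.mem_image_of_mem _ (Finset.filter_subset _ _ hy)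
        _ ≤ #(B.image (fdist x)) * ∑ ρ ∈ B.image (fdist x), #{y ∈ B' | fdist x y = ρ} ^ 2 :=
            sq_sum_le_card_mul_sum_sq
        _ ≤ #(B.image (fdist x)) * ∑ ρ, #{y ∈ B' | fdist x y = ρ} ^ 2 := by
            gcongr
            exact Finset.subset_univ _
        _ ≤ _ := by
            gcongr
            simp only [sq]
            rw [sum_fiber_mul]
            exact isosceles_nz_le h2 B x
    rw [hbdef]
    exact_mod_cast this
  set M : ℝ := (#(B.image (fdist x)) : ℝ) with hM
  have hM0 : 0 ≤ M := by positivity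
  have c3 : (b / 2) ^ 2 ≤ (#B' : ℝ) ^ 2 := by
    have : b / 2 ≤ #B' := by linarith
    have : 0 ≤ b / 2 := by linarith
    gcongr
  have c4 : q * (b / 2) ^ 2 ≤ M * (3 * b ^ 2) := by
    calc q * (b / 2) ^ 2 ≤ q * (M * (apexNz B x + b)) := by
          gcongr
          exact c3.trans c2
      _ = M * (q * apexNz B x + q * b) := by ring
      _ ≤ _ := by
          gcongr
          nlinarith
  have hb2 : 0 < b ^ 2 := by
    have : 0 < b := by linarith
    positivity
  refine le_of_mul_le_mul_right (a := b ^ 2) ?_ hb2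
  nlinarith

end FinitePlane

section Tree

open Finset

variable {F V : Type*} [Field F]

/-! ### Trees -/

/-- A vertex `u ≠ v` of a connected graph has a neighbour one step closer to `v`. -/
lemma exists_parent {G : SimpleGraph V} (hG : G.Connected) {u v : V} (huv : u ≠ v) :
    ∃ w, G.Adj u w ∧ G.dist w v + 1 = G.dist u v := by
  obtain ⟨W, hW⟩ := hG.exists_walk_length_eq_dist u v
  cases W with
  | nil => exact absurd rfl huv
  | cons h q =>
    rename_i w
    refine ⟨w, h, le_antisymm ?_ ?_⟩
    · rw [← hW, SimpleGraph.Walk.length_cons]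
      exact Nat.succ_le_succ (SimpleGraph.dist_le q)
    · have h1 := hG.dist_triangle (u := u) (v := w) (w := v)
      rw [SimpleGraph.dist_eq_one_iff_adj.2 h] at h1
      omega

/-- For a tree rooted at `v` with parent function `π`, the point `y` is good for the vertex `u`
when, for every child `w` of `u`, there are `m` points of `A`, at distinct distances from `y`, all
of which are good for `w`. -/
inductive GoodPt (v : V) (π : V → V) (A : Set (F × F)) (m : ℕ) : V → F × F → Prop
  | mk (u : V) (y : F × F) (g : V → Fin m → F × F)
      (hinj : ∀ w, w ≠ v → π w = u → Function.Injective fun i => fdist y (g w i))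
      (hA : ∀ w, w ≠ v → π w = u → ∀ i, g w i ∈ A)
      (hgood : ∀ w, w ≠ v → π w = u → ∀ i, GoodPt v π A m w (g w i)) :
      GoodPt v π A m u y

lemma exists_distinct [DecidableEq F] {m : ℕ} (B : Finset (F × F)) (y : F × F)
    (h : m ≤ #(B.image (fdist y))) :
    ∃ g : Fin m → F × F, (Function.Injective fun i => fdist y (g i)) ∧ ∀ i, g i ∈ B := by
  obtain ⟨e⟩ := Function.Embedding.nonempty_of_card_le (α := Fin m)
    (β := ↥(B.image (fdist y))) (by simpa using h)
  choose g hg hg' using fun i => Finset.mem_image.1 (e i).2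
  refine ⟨g, fun i j hij => e.injective (Subtype.ext ?_), hg⟩
  simpa only [hg'] using hij

open Classical in
/-- If every set of at least `t` points contains a point determining at least `m` distances to any
given set of at least `t` points, then few points are bad for `u`: at most `t` for each child of `u`. -/
lemma card_bad [Fintype F] [DecidableEq F] [Fintype V] {v : V} {π : V → V} {r : V → ℕ} {m : ℕ} {t : ℝ}
    (ht : 0 ≤ t) (hr : ∀ u, u ≠ v → r (π u) + 1 = r u)
    (hpin : ∀ B X : Finset (F × F), t ≤ #B → t ≤ #X → ∃ x ∈ X, m ≤ #(B.image (fdist x)))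
    (A : Finset (F × F)) (hA : Fintype.card V * t ≤ #A) (N : ℕ) (hN : ∀ w, r w < N) :
    ∀ n u, N ≤ r u + n →
      (#{y : F × F | ¬ GoodPt v π A m u y} : ℝ) ≤ #{w | w ≠ v ∧ π w = u} * t := by
  intro n
  induction n with
  | zero => intro u hu; have := hN u; omega
  | succ n ih =>
    intro u hu
    have hsub : ({y : F × F | ¬ GoodPt v π A m u y} : Finset (F × F)) ⊆
        ({w | w ≠ v ∧ π w = u} : Finset V).biUnion fun w =>
          {y : F × F | #(({z ∈ A | GoodPt v π A m w z} : Finset (F × F)).image (fdist y)) < m} := by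
      intro y hy
      by_contra hcon
      simp only [mem_filter, mem_univ, true_and] at hy
      simp only [mem_biUnion, mem_filter, mem_univ, true_and, not_exists, not_and, not_lt] at hcon
      have : ∀ w, ∃ g : Fin m → F × F, w ≠ v → π w = u →
          (Function.Injective fun i => fdist y (g i)) ∧
            ∀ i, g i ∈ ({z ∈ A | GoodPt v π A m w z} : Finset (F × F)) := by
        intro w
        by_cases hw : w ≠ v ∧ π w = u
        · obtain ⟨g, hg⟩ := exists_distinct _ y (hcon w hw)
          exact ⟨g, fun _ _ => hg⟩
        · exact ⟨fun _ => 0, fun h1 h2 => absurd ⟨h1, h2⟩ hw⟩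
      choose g hg using this
      refine hy ⟨u, y, g, fun w h1 h2 => (hg w h1 h2).1, fun w h1 h2 i => ?_, fun w h1 h2 i => ?_⟩
      · exact (Finset.mem_filter.1 ((hg w h1 h2).2 i)).1
      · exact (Finset.mem_filter.1 ((hg w h1 h2).2 i)).2
    have h1 : (#{y : F × F | ¬ GoodPt v π A m u y} : ℝ) ≤ ∑ w : V with w ≠ v ∧ π w = u,
        (#{y : F × F | #(({z ∈ A | GoodPt v π A m w z} : Finset (F × F)).image (fdist y)) < m} :
          ℝ) := by
      exact_mod_cast (Finset.card_le_card hsub).trans Finset.card_biUnion_le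
    refine h1.trans ?_
    rw [← nsmul_eq_mul]
    refine Finset.sum_le_card_nsmul _ _ _ fun w hw => ?_
    simp only [mem_filter, mem_univ, true_and] at hw
    -- Otherwise `hpin` applies to this set and the points of `A` good for `w`.
    by_contra! hlt
    have hbad := ih w (by have := hr w hw.1; rw [hw.2] at this; omega)
    have hch : #{w' | w' ≠ v ∧ π w' = w} + 1 ≤ Fintype.card V := by
      have : ({w' | w' ≠ v ∧ π w' = w} : Finset V) ⊆ univ.erase v := by
        intro a ha
        simp only [mem_filter, mem_univ, true_and] at ha
        simp [ha.1]
      have h2 := Finset.card_le_card this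
      rw [Finset.card_erase_of_mem (mem_univ v), Finset.card_univ] at h2
      have : 0 < Fintype.card V := Fintype.card_pos_iff.2 ⟨v⟩
      omega
    have hch' : (#{w' | w' ≠ v ∧ π w' = w} : ℝ) + 1 ≤ Fintype.card V := by exact_mod_cast hch
    have hgood : t ≤ #{z ∈ A | GoodPt v π A m w z} := by
      have e : #{z ∈ A | GoodPt v π A m w z} + #{z ∈ A | ¬ GoodPt v π A m w z} = #A :=
        Finset.card_filter_add_card_filter_not _
      have e' : (#{z ∈ A | GoodPt v π A m w z} : ℝ) + #{z ∈ A | ¬ GoodPt v π A m w z} = #A := by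
        exact_mod_cast e
      have e2 : (#{z ∈ A | ¬ GoodPt v π A m w z} : ℝ) ≤ #{z : F × F | ¬ GoodPt v π A m w z} := by
        exact_mod_cast Finset.card_le_card
          (Finset.filter_subset_filter _ (Finset.subset_univ A))
      nlinarith
    obtain ⟨x, hx, hx'⟩ := hpin _ _ hgood hlt.le
    simp only [mem_filter, mem_univ, true_and] at hx
    exact absurd hx' (not_le.2 hx)

open Classical in
/-- The placement of the tree determined by a next-point function `nxt` and choices `s`, computed
by a recursion along the first `n` ancestors, with the root placed at `x`. The value at `u` is the
intended one when `n` is the depth of `u`. -/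
noncomputable def place {m : ℕ} (v : V) (π : V → V) (x : F × F) (nxt : V → F × F → Fin m → F × F)
    (s : {u // u ≠ v} → Fin m) : ℕ → V → F × F
  | 0, _ => x
  | n + 1, u => if h : u = v then x else nxt u (place v π x nxt s n (π u)) (s ⟨u, h⟩)

/-- A point that is good for the root carries at least `m ^ k` distinct trees: the `m` choices at
every vertex other than the root can be read off from the edge lengths, going up from the root. -/
lemma le_treeCount [Fintype F] [Fintype V] {G : SimpleGraph V} {v : V} {π : V → V} {r : V → ℕ}
    {m k : ℕ} (hV : Fintype.card V = k + 1) (hadj : ∀ u, u ≠ v → G.Adj u (π u))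
    (hr : ∀ u, u ≠ v → r (π u) + 1 = r u) (A : Set (F × F)) (x : F × F)
    (hx : GoodPt v π A m v x) : m ^ k ≤ treeCount G v x A := by
  classical
  have key : ∀ u y, ∃ g : V → Fin m → F × F, GoodPt v π A m u y → ∀ w, w ≠ v → π w = u →
      (Function.Injective fun i => fdist y (g w i)) ∧ ∀ i, g w i ∈ A ∧ GoodPt v π A m w (g w i) := by
    intro u y
    by_cases h : GoodPt v π A m u y
    · cases h with
      | mk _ _ g hinj hA hgood =>
        exact ⟨g, fun _ w h1 h2 => ⟨hinj w h1 h2, fun i => ⟨hA w h1 h2 i, hgood w h1 h2 i⟩⟩⟩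
    · exact ⟨fun _ _ => 0, fun h' => absurd h' h⟩
  choose g hg using key
  set φ : ({u // u ≠ v} → Fin m) → V → F × F := fun s u =>
    place v π x (fun w y i => g (π w) y w i) s (r u) u with hφ
  have φv : ∀ s, φ s v = x := by
    intro s
    simp only [hφ]
    cases r v <;> simp [place]
  have φu : ∀ s u (h : u ≠ v), φ s u = g (π u) (φ s (π u)) u (s ⟨u, h⟩) := by
    intro s u h
    simp only [hφ]
    rw [← hr u h, place, dif_neg h]
  have good : ∀ s n u, r u = n → GoodPt v π A m u (φ s u) := by
    intro s n
    induction n with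
    | zero =>
      intro u hu
      by_cases h : u = v
      · rw [h, φv]; exact hx
      · have := hr u h; omega
    | succ n ih =>
      intro u hu
      by_cases h : u = v
      · rw [h, φv]; exact hx
      · rw [φu s u h]
        exact ((hg _ _ (ih (π u) (by have := hr u h; omega)) u h rfl).2 _).2
  have inA : ∀ s u, u ≠ v → φ s u ∈ A := by
    intro s u h
    rw [φu s u h]
    exact ((hg _ _ (good s _ (π u) rfl) u h rfl).2 _).1
  have inj : Function.Injective fun s => (fun e => edgeLengths (φ s) e.1 : G.edgeSet → F) := by
    intro s s' hss
    have step : ∀ u (h : u ≠ v), φ s (π u) = φ s' (π u) → s ⟨u, h⟩ = s' ⟨u, h⟩ := by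
      intro u h e
      have := congrFun hss ⟨s(π u, u), (hadj u h).symm⟩
      simp only [edgeLengths, Sym2.lift_mk] at this
      rw [φu s u h, φu s' u h, ← e] at this
      exact (hg _ _ (good s _ (π u) rfl) u h rfl).1 this
    have same : ∀ n u, r u = n → φ s u = φ s' u := by
      intro n
      induction n with
      | zero =>
        intro u hu
        by_cases h : u = v
        · rw [h, φv, φv]
        · have := hr u h; omega
      | succ n ih =>
        intro u hu
        by_cases h : u = v
        · rw [h, φv, φv]
        · have e := ih (π u) (by have := hr u h; omega)
          rw [φu s u h, φu s' u h, ← e, step u h e]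
    funext u
    exact step u.1 u.2 (same _ _ rfl)
  have hcard : Nat.card ({u // u ≠ v} → Fin m) = m ^ k := by
    rw [Nat.card_eq_fintype_card, Fintype.card_fun, Fintype.card_fin, Fintype.card_subtype_compl,
      Fintype.card_subtype_eq, hV, Nat.add_sub_cancel]
  rw [← hcard, ← Set.ncard_range_of_injective inj, treeCount]
  refine Set.ncard_le_ncard ?_ (Set.toFinite _)
  rintro _ ⟨s, rfl⟩
  exact ⟨φ s, φv s, inA s, rfl⟩

end Tree

/-! ### The theorem -/

/-- **Theorem 3.2 (two sets of large size over prime fields).**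
Let `p` be an odd prime, `T` a tree with `k ≥ 1` edges, `v` a vertex of `T`, and
`E, F ⊆ 𝔽_p²` with `|E| = |F| ≥ 4 · 2^(16k) · p^(4/3)`. Then there are a constant
`c = c(k) > 0` and a subset `E' ⊆ E` with `|E'| ≥ |E| / 2^(8k)` such that for every `x ∈ E'`
the number of distinct trees `(T', x)` isomorphic to `(T, v)` with all vertices other than `x`
in `F` is at least `c · p^k`. -/
theorem tree_two_sets_large :
    ∀ k : ℕ, 1 ≤ k → ∃ c : ℝ, 0 < c ∧
      ∀ (p : ℕ), p.Prime → Odd p →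
        ∀ (V : Type) [Fintype V] (G : SimpleGraph V) (v : V),
          G.IsTree → G.edgeSet.ncard = k →
            ∀ E F : Finset (ZMod p × ZMod p),
              E.card = F.card →
              4 * 2 ^ (16 * k) * (p : ℝ) ^ ((4 : ℝ) / 3) ≤ (E.card : ℝ) →
                ∃ E' ⊆ E, (E.card : ℝ) / 2 ^ (8 * k) ≤ (E'.card : ℝ) ∧
                  ∀ x ∈ E', c * (p : ℝ) ^ k ≤ (treeCount G v x (↑F) : ℝ) := by
  classical
  intro k hk
  refine ⟨(1 / 12) ^ k, by positivity, ?_⟩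
  intro p hp hodd V _ G v hG hk' E A hEA hE
  have : Fact p.Prime := ⟨hp⟩
  have h2 : (2 : ZMod p) ≠ 0 := by
    intro h
    have : p ∣ 2 := (ZMod.natCast_eq_zero_iff 2 p).1 (by exact_mod_cast h)
    have := (Nat.prime_dvd_prime_iff_eq hp Nat.prime_two).1 this
    subst this
    exact absurd hodd (by decide)
  have hV : Fintype.card V = k + 1 := by
    have := hG.card_edgeFinset
    rw [← hk', ← this, ← SimpleGraph.coe_edgeFinset, Set.ncard_coe_finset]
  have hpar : ∀ u, ∃ w, u ≠ v → G.Adj u w ∧ G.dist w v + 1 = G.dist u v := by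
    intro u
    by_cases h : u = v
    · exact ⟨v, fun h' => absurd h h'⟩
    · obtain ⟨w, hw⟩ := exists_parent hG.connected h
      exact ⟨w, fun _ => hw⟩
  choose π hπ using hpar
  set P : ℝ := (p : ℝ) ^ ((4 : ℝ) / 3) with hP
  have hp0 : (0 : ℝ) < p := by exact_mod_cast hp.pos
  have hP0 : 0 < P := Real.rpow_pos_of_pos hp0 _
  have hP3 : P ^ 3 = (p : ℝ) ^ 4 := by
    rw [hP, ← Real.rpow_natCast, ← Real.rpow_mul hp0.le, ← Real.rpow_natCast]
    norm_num
  have hk2 : (k : ℝ) + 1 ≤ 2 ^ k := by exact_mod_cast Nat.lt_two_pow_self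
  -- The hypothesis leaves ample room: all that is needed is `|E| ≥ 32 (k + 1) p ^ (4/3)`.
  have hbig : 2 * ((k + 1) * (16 * P)) ≤ (E.card : ℝ) := by
    refine le_trans ?_ hE
    have h15 : (8 : ℝ) ≤ 2 ^ (15 * k) := by
      calc (8 : ℝ) ≤ 2 ^ 15 := by norm_num
        _ ≤ _ := pow_le_pow_right₀ (by norm_num) (by omega)
    have e : (2 : ℝ) ^ (16 * k) = 2 ^ k * 2 ^ (15 * k) := by rw [← pow_add]; congr 1; ring
    have : ((k : ℝ) + 1) * 8 ≤ 2 ^ (16 * k) := by rw [e]; gcongr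
    nlinarith
  set m : ℕ := ⌈(p : ℝ) / 12⌉₊ with hm
  have hbad := card_bad (V := V) (v := v) (π := π) (r := fun u => G.dist u v) (m := m)
    (t := 16 * P) (by positivity) (fun u h => (hπ u h).2) (fun B X hB hX => by
      have cube : ∀ b : ℝ, 16 * P ≤ b → 4096 * (Fintype.card (ZMod p) : ℝ) ^ 4 ≤ b ^ 3 := by
        intro b hb
        calc 4096 * (Fintype.card (ZMod p) : ℝ) ^ 4 = (16 * P) ^ 3 := by
              rw [ZMod.card, mul_pow, hP3]; norm_num
          _ ≤ b ^ 3 := by gcongr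
      obtain ⟨x, hx, h⟩ := exists_pinned h2 B X (cube _ hB) (cube _ hX)
      refine ⟨x, hx, Nat.ceil_le.2 ?_⟩
      rw [ZMod.card] at h
      linarith) A
    (by rw [hV, ← hEA]; push_cast; nlinarith) (Finset.univ.sup (fun u => G.dist u v) + 1)
    (fun w => Nat.lt_succ_of_le (Finset.le_sup (f := fun u => G.dist u v) (Finset.mem_univ w)))
    _ v (Nat.le_add_left _ _)
  -- At most `16 (k + 1) p ^ (4/3) ≤ |E| / 2` points are bad for the root.
  refine ⟨E.filter fun x => GoodPt v π (A : Set (ZMod p × ZMod p)) m v x,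
    Finset.filter_subset _ _, ?_, ?_⟩
  · have e := Finset.card_filter_add_card_filter_not (s := E)
      (fun x => GoodPt v π (A : Set (ZMod p × ZMod p)) m v x)
    have e' := congrArg (Nat.cast (R := ℝ)) e
    push_cast at e'
    have e2 : ((E.filter fun x => ¬ GoodPt v π (A : Set (ZMod p × ZMod p)) m v x).card : ℝ) ≤
        (Finset.univ.filter fun x => ¬ GoodPt v π (A : Set (ZMod p × ZMod p)) m v x).card := by
      exact_mod_cast Finset.card_le_card (Finset.filter_subset_filter _ (Finset.subset_univ E))
    have e3 : ((Finset.univ.filter fun w => w ≠ v ∧ π w = v).card : ℝ) ≤ k + 1 := by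
      have := Finset.card_le_univ (Finset.univ.filter fun w => w ≠ v ∧ π w = v)
      rw [hV] at this
      exact_mod_cast this
    have e4 : ((Finset.univ.filter fun w => w ≠ v ∧ π w = v).card : ℝ) * (16 * P) ≤
        (k + 1) * (16 * P) := by gcongr
    have e5 : (E.card : ℝ) / 2 ^ (8 * k) ≤ E.card / 2 := by
      gcongr
      calc (2 : ℝ) = 2 ^ 1 := by norm_num
        _ ≤ _ := pow_le_pow_right₀ (by norm_num) (by omega)
    linarith
  · intro x hx
    have hc := le_treeCount (r := fun u => G.dist u v) hV (fun u h => (hπ u h).1) (fun u h => (hπ u h).2) _ x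
      (Finset.mem_filter.1 hx).2
    calc (1 / 12) ^ k * (p : ℝ) ^ k = ((p : ℝ) / 12) ^ k := by rw [← mul_pow]; congr 1; ring
      _ ≤ (m : ℝ) ^ k := by
          gcongr
          exact Nat.le_ceil _
      _ ≤ _ := by exact_mod_cast hc
end
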